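/- arXiv:1701.01033 — 3 statements merged into one kernel-verified Lean document; each statement's English description precedes it below -/
import Mathlib

section
/- Let N ∈ {1,2,3,4} and let m_1,…,m_N ∈ ℝ³ ∖ {0} be such that every subfamily consisting of at most three of the m_j is linearly independent. Suppose s_1,…,s_N and s̃_1,…,s̃_N are vectors in ℝ³ satisfying s_j·m_j = 0 and s̃_j·m_j = 0 for all j, and Σ_{j=1}^N s_j⊗m_j = Σ_{j=1}^N s̃_j⊗m_j. Then s_j = s̃_j for every j = 1,…,N. Equivalently, if s_j·m_j = 0 for all j and Σ_{j=1}^N s_j⊗m_j = 0, then s_j = 0 for all j. -/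
open Matrix

/-!
Put `d j = s j - s' j`. Each row of `∑ j, d j ⊗ m j = 0` is a linear relation between the `m j`,
so only dependent `m` are of interest. Let `c` be a nontrivial relation between them. Since any
relation with a vanishing coefficient is trivial, all `c j` are nonzero and every relation is
proportional to `c`; hence `c a • d j = c j • d a` for all `a` and `j`. Pairing with `m j` gives
`d a ⬝ᵥ m j = 0` for all `j`, and `d a = 0` because the `m j` contain as many independent vectors
as there are coordinates.
-/

section Relations

variable {R ι M : Type*} [Fintype ι] [AddCommGroup M] {v : ι → M} {a : ι}

theorem eq_zero_of_sum_smul_eq_zero_of_apply_eq_zero [Ring R] [Module R M] {c : ι → R}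
    (hv : LinearIndepOn R v {a}ᶜ) (hc : ∑ j, c j • v j = 0) (ha : c a = 0) : c = 0 := by
  classical
  have hsum : ∑ j ∈ {a}ᶜ, c j • v j = 0 := by
    rwa [Fintype.sum_eq_add_sum_compl a, ha, zero_smul, zero_add] at hc
  have hcompl : ∀ j ∈ ({a}ᶜ : Finset ι), c j = 0 :=
    linearIndepOn_finset_iff.mp (by simpa using hv) c hsum
  ext j
  obtain rfl | hj := eq_or_ne j a
  · exact ha
  · exact hcompl j (by simpa using hj)

theorem mul_apply_eq_mul_apply_of_sum_smul_eq_zero [CommRing R] [Module R M] {b c : ι → R}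
    (hv : LinearIndepOn R v {a}ᶜ) (hb : ∑ j, b j • v j = 0) (hc : ∑ j, c j • v j = 0) (j : ι) :
    c a * b j = b a * c j := by
  have hrel : ∑ j, (c a * b j - b a * c j) • v j = 0 := by
    simp only [sub_smul, mul_smul, Finset.sum_sub_distrib, ← Finset.smul_sum, hb, hc, smul_zero,
      sub_self]
  have hzero := eq_zero_of_sum_smul_eq_zero_of_apply_eq_zero hv hrel (by ring)
  exact sub_eq_zero.mp (congrFun hzero j)

end Relations

theorem sum_smul_eq_zero_of_sum_vecMulVec_eq_zero {R ι m n : Type*} [NonUnitalNonAssocSemiring R]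
    [Fintype ι] {s : ι → m → R} {v : ι → n → R} (h : ∑ j, vecMulVec (s j) (v j) = 0) (i : m) :
    ∑ j, s j i • v j = 0 := by
  ext k
  simpa only [Matrix.sum_apply, vecMulVec_apply, Matrix.zero_apply, Finset.sum_apply,
    Pi.smul_apply, smul_eq_mul, Pi.zero_apply] using congrFun₂ h i k

section Domain

variable {R ι n : Type*} [CommRing R] [IsDomain R] [Fintype ι] [Fintype n]

theorem eq_zero_of_forall_dotProduct_eq_zero {v : ι → n → R} (hv : LinearIndependent R v)
    (hcard : Fintype.card ι = Fintype.card n) {w : n → R} (hw : ∀ j, v j ⬝ᵥ w = 0) : w = 0 := by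
  classical
  let e : n ≃ ι := (Fintype.equivOfCardEq hcard).symm
  let A : Matrix n n R := Matrix.of (v ∘ e)
  have hA : Function.Injective A.vecMul := vecMul_injective_iff.mpr (hv.comp e e.injective)
  have hdet : A.det ≠ 0 := fun hdet => by
    obtain ⟨u, hu, huA⟩ := exists_vecMul_eq_zero_iff.mpr hdet
    exact hu (hA (huA.trans (zero_vecMul A).symm))
  exact eq_zero_of_mulVec_eq_zero hdet (funext fun i => hw (e i))

variable {m s s' : ι → n → R}

theorem eq_zero_of_sum_vecMulVec_eq_zero_of_not_linearIndependent
    (hcard : Fintype.card ι = Fintype.card n + 1) (hm : ¬LinearIndependent R m)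
    (hcompl : ∀ a, LinearIndepOn R m {a}ᶜ) (hs : ∀ j, s j ⬝ᵥ m j = 0)
    (hsum : ∑ j, vecMulVec (s j) (m j) = 0) : s = 0 := by
  classical
  obtain ⟨c, hc, k, hck⟩ := Fintype.not_linearIndependent_iff.mp hm
  have hc_ne : ∀ j, c j ≠ 0 := fun j hj =>
    hck (congrFun (eq_zero_of_sum_smul_eq_zero_of_apply_eq_zero (hcompl j) hc hj) k)
  have hrow : ∀ i, ∑ j, s j i • m j = 0 := sum_smul_eq_zero_of_sum_vecMulVec_eq_zero hsum
  have hprop : ∀ a j, c a • s j = c j • s a := fun a j => by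
    ext i
    simpa only [Pi.smul_apply, smul_eq_mul, mul_comm (s a i)] using
      mul_apply_eq_mul_apply_of_sum_smul_eq_zero (hcompl a) (hrow i) hc j
  have horth : ∀ a j, m j ⬝ᵥ s a = 0 := fun a j => by
    have h : c j • (m j ⬝ᵥ s a) = 0 := by
      rw [← dotProduct_smul, ← hprop, dotProduct_smul, dotProduct_comm, hs, smul_zero]
    exact (smul_eq_zero.mp h).resolve_left (hc_ne j)
  ext1 a
  have hcard' : Fintype.card ({a}ᶜ : Set ι) = Fintype.card n := by
    rw [Fintype.card_compl_set, hcard, Set.card_singleton, Nat.add_sub_cancel]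
  exact eq_zero_of_forall_dotProduct_eq_zero (hcompl a) hcard' fun j => horth a j

theorem eq_zero_of_sum_vecMulVec_eq_zero (hcard : Fintype.card ι ≤ Fintype.card n + 1)
    (hindep : ∀ t : Finset ι, t.card ≤ Fintype.card n → LinearIndepOn R m t)
    (hs : ∀ j, s j ⬝ᵥ m j = 0) (hsum : ∑ j, vecMulVec (s j) (m j) = 0) : s = 0 := by
  classical
  by_cases hm : LinearIndependent R m
  · ext j i
    exact Fintype.linearIndependent_iff.mp hm (fun j => s j i)
      (sum_smul_eq_zero_of_sum_vecMulVec_eq_zero hsum i) j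
  · have hlt : Fintype.card n < Fintype.card ι := by
      by_contra! hle
      exact hm (by simpa using hindep Finset.univ hle)
    have hcompl : ∀ a, LinearIndepOn R m {a}ᶜ := fun a => by
      have hcard_compl : ({a}ᶜ : Finset ι).card ≤ Fintype.card n := by
        rw [Finset.card_compl, Finset.card_singleton]
        omega
      simpa using hindep {a}ᶜ hcard_compl
    exact eq_zero_of_sum_vecMulVec_eq_zero_of_not_linearIndependent (by omega) hm hcompl hs hsum

theorem unique_slip_plane_decomposition_general (hcard : Fintype.card ι ≤ Fintype.card n + 1)
    (hindep : ∀ t : Finset ι, t.card ≤ Fintype.card n → LinearIndepOn R m t)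
    (hs : ∀ j, s j ⬝ᵥ m j = 0) (hs' : ∀ j, s' j ⬝ᵥ m j = 0)
    (hsum : ∑ j, vecMulVec (s j) (m j) = ∑ j, vecMulVec (s' j) (m j)) : s = s' := by
  have hperp : ∀ j, (s - s') j ⬝ᵥ m j = 0 := fun j => by
    rw [Pi.sub_apply, sub_dotProduct, hs, hs', sub_zero]
  have hsum_sub : ∑ j, vecMulVec ((s - s') j) (m j) = 0 := by
    simp only [Pi.sub_apply, sub_vecMulVec, Finset.sum_sub_distrib, hsum, sub_self]
  exact sub_eq_zero.mp (eq_zero_of_sum_vecMulVec_eq_zero hcard hindep hperp hsum_sub)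

end Domain

/-- If `N ∈ {1,2,3,4}`, any at most three of the `m_j` are linearly
independent, `s_j ⊥ m_j`, `s̃_j ⊥ m_j`, and `Σ s_j ⊗ m_j = Σ s̃_j ⊗ m_j`, then `s_j = s̃_j`
for every `j`. -/
theorem unique_slip_plane_decomposition
    (N : ℕ) (hN : 1 ≤ N ∧ N ≤ 4) (m : Fin N → (Fin 3 → ℝ))
    (hm0 : ∀ j, m j ≠ 0)
    (hindep : ∀ t : Finset (Fin N), t.card ≤ 3 →
      LinearIndependent ℝ (fun j : {x // x ∈ t} => m j.1))
    (s s' : Fin N → (Fin 3 → ℝ))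
    (hs : ∀ j, ∑ i, s j i * m j i = 0)
    (hs' : ∀ j, ∑ i, s' j i * m j i = 0)
    (hsum : ∑ j, vecMulVec (s j) (m j) = ∑ j, vecMulVec (s' j) (m j)) :
    ∀ j, s j = s' j := by
  exact congrFun (unique_slip_plane_decomposition_general (by simpa using hN.2)
    (fun t ht => hindep t (by simpa using ht)) hs hs' hsum)
end

section
/- Let Ω ⊂ ℝ³ be a bounded open set, p ∈ [1,∞), and let m_1,…,m_N ∈ ℝ³ be pairwise linearly independent unit vectors. Suppose s_1^k,…,s_N^k ∈ L^p(Ω;ℝ³), k ∈ ℕ, satisfy: (P1) for each k, the single-plane condition, i.e. s_j^k(x)·m_j = 0 a.e. and |s_i^k(x)||s_j^k(x)| = 0 a.e. for i ≠ j; (P2) s_j^k ⇀ s_j weakly in L^p(Ω;ℝ³) for each j; (P3) there is K < ∞ with Σ_{j=1}^N ∫_Ω |∇_{m_j^⊥} s_j^k| ≤ K for all k. Then the weak limits satisfy the single-plane condition as well: s_j(x)·m_j = 0 a.e. and |s_i(x)||s_j(x)| = 0 a.e. for all i ≠ j. -/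
open MeasureTheory Filter Topology Matrix
open scoped ENNReal RealInnerProductSpace

noncomputable section

/-- Points of physical space `ℝ³`, with the Euclidean norm. -/
abbrev V3 : Type := EuclideanSpace ℝ (Fin 3)

/-- Real `3 × 3` matrices. -/
abbrev M3 : Type := Matrix (Fin 3) (Fin 3) ℝ

/-- Frobenius norm of a `3 × 3` matrix. -/
def frob (M : M3) : ℝ := Real.sqrt (∑ i, ∑ j, (M i j) ^ 2)

/-- The dyadic (outer) product `s ⊗ m`, i.e. the matrix `(sᵢ mₖ)`. -/
def outer (s m : V3) : M3 := fun i k => s i * m k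

/-- Cofactor matrix (transpose of the adjugate). -/
def cof (M : M3) : M3 := (Matrix.adjugate M)ᵀ

/-- Symmetric part `(M + Mᵀ)/2`. -/
def symPart (M : M3) : M3 := (1 / 2 : ℝ) • (M + Mᵀ)

/-- Membership in `L^p(Ω; ℝ³)` for a real exponent `p`. -/
def MemLpV (p : ℝ) (Ω : Set V3) (f : V3 → V3) : Prop :=
  AEStronglyMeasurable f (volume.restrict Ω) ∧ IntegrableOn (fun x => ‖f x‖ ^ p) Ω

/-- Membership in `L^p(Ω; ℝ^{3×3})` (Frobenius norm) for a real exponent `p`. -/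
def MemLpM (p : ℝ) (Ω : Set V3) (F : V3 → M3) : Prop :=
  (∀ i k : Fin 3, AEStronglyMeasurable (fun x => F x i k) (volume.restrict Ω)) ∧
    IntegrableOn (fun x => frob (F x) ^ p) Ω

/-- The `L^p`-norm of an `ℝ³`-valued map. -/
def lpNormV (p : ℝ) (Ω : Set V3) (f : V3 → V3) : ℝ := (∫ x in Ω, ‖f x‖ ^ p) ^ (1 / p)

/-- The `L^p`-norm of a matrix-valued map (Frobenius norm). -/
def lpNormM (p : ℝ) (Ω : Set V3) (F : V3 → M3) : ℝ := (∫ x in Ω, frob (F x) ^ p) ^ (1 / p)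

/-- Test functions for weak `L^p` convergence: elements of the conjugate space
`L^{p'}(Ω;ℝ³)`, where `p' = ∞` (bounded functions) if `p = 1` and
`p' = p/(p-1)` if `p > 1`. -/
def ConjTestV (p : ℝ) (Ω : Set V3) (g : V3 → V3) : Prop :=
  AEStronglyMeasurable g (volume.restrict Ω) ∧
    ((p = 1 ∧ ∃ Cb : ℝ, ∀ᵐ x ∂volume.restrict Ω, ‖g x‖ ≤ Cb) ∨
      (1 < p ∧ IntegrableOn (fun x => ‖g x‖ ^ (p / (p - 1))) Ω))

/-- Weak convergence `sₖ ⇀ s` in `L^p(Ω;ℝ³)`. -/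
def WeakLpV (p : ℝ) (Ω : Set V3) (sk : ℕ → V3 → V3) (s : V3 → V3) : Prop :=
  ∀ g : V3 → V3, ConjTestV p Ω g →
    Tendsto (fun k => ∫ x in Ω, ⟪sk k x, g x⟫) atTop (nhds (∫ x in Ω, ⟪s x, g x⟫))

/-- Test functions for weak `L^p` convergence of matrix fields. -/
def ConjTestM (p : ℝ) (Ω : Set V3) (g : V3 → M3) : Prop :=
  (∀ i k : Fin 3, AEStronglyMeasurable (fun x => g x i k) (volume.restrict Ω)) ∧
    ((p = 1 ∧ ∃ Cb : ℝ, ∀ᵐ x ∂volume.restrict Ω, frob (g x) ≤ Cb) ∨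
      (1 < p ∧ IntegrableOn (fun x => frob (g x) ^ (p / (p - 1))) Ω))

/-- Weak convergence `Fₖ ⇀ F` in `L^p(Ω;ℝ^{3×3})`. -/
def WeakLpM (p : ℝ) (Ω : Set V3) (Fk : ℕ → V3 → M3) (F : V3 → M3) : Prop :=
  ∀ g : V3 → M3, ConjTestM p Ω g →
    Tendsto (fun k => ∫ x in Ω, ∑ i, ∑ l, Fk k x i l * g x i l) atTop
      (nhds (∫ x in Ω, ∑ i, ∑ l, F x i l * g x i l))

/-- `φ` is a `C¹` function compactly supported inside the open set `U`. -/
def C1c (U : Set V3) (φ : V3 → V3) : Prop :=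
  ContDiff ℝ 1 φ ∧ HasCompactSupport φ ∧ tsupport φ ⊆ U

/-- The planar total variation `∫_U |∇_{m^⊥} s|`, defined by duality relative to an
orthonormal basis `(e₁, e₂)` of `m^⊥`. -/
def PTV (U : Set V3) (e₁ e₂ : V3) (s : V3 → V3) : ℝ≥0∞ :=
  ⨆ φ : {φ : (V3 → V3) × (V3 → V3) //
      C1c U φ.1 ∧ C1c U φ.2 ∧ ∀ x, ‖φ.1 x‖ ^ 2 + ‖φ.2 x‖ ^ 2 ≤ 1},
    ENNReal.ofReal
      (∫ x in U, (⟪s x, fderiv ℝ (φ : (V3 → V3) × (V3 → V3)).1 x e₁⟫ +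
        ⟪s x, fderiv ℝ (φ : (V3 → V3) × (V3 → V3)).2 x e₂⟫))

/-- `(e₁, e₂)` is an orthonormal basis of the plane `m^⊥`. -/
def ONBperp (m e₁ e₂ : V3) : Prop :=
  ‖e₁‖ = 1 ∧ ‖e₂‖ = 1 ∧ ⟪e₁, e₂⟫ = 0 ∧ ⟪e₁, m⟫ = 0 ∧ ⟪e₂, m⟫ = 0

/-- `G` is the weak (distributional) gradient of `y` on `Ω`. -/
def IsWeakGradient (Ω : Set V3) (y : V3 → V3) (G : V3 → M3) : Prop :=
  ∀ φ : V3 → ℝ, ContDiff ℝ (⊤ : ℕ∞) φ → HasCompactSupport φ → tsupport φ ⊆ Ω →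
    ∀ i k : Fin 3,
      ∫ x in Ω, y x i * fderiv ℝ φ x (EuclideanSpace.single k (1 : ℝ)) =
        - ∫ x in Ω, G x i k * φ x

/-!
Fix `i ≠ j`. Unit vectors `a ⊥ m i`, `b ⊥ m j` and a common direction `c ⊥ m i, m j` form a basis
of `ℝ³`. In these coordinates the `i`-th field `f` has controlled variation in the directions `a, c`
and the `j`-th field `g` in the directions `b, c`. Let `Q` be a cube of side `2r`. At almost every
point of `Q` one of `f`, `g` vanishes. Where `f` does, the mass of `f` on the slice of `Q` through
that point parallel to `a, c` is controlled by the variation of `f` in that slice; where `g` does,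
the same holds with `b, c`. The first slice depends on the `b`-coordinate of the point only
and the second on its `a`-coordinate, so integrating the product of the two slice masses over `Q`
gives `2r (∫_Q |f|) (∫_Q |g|) ≤ (2r)² (Var f ∫_Q |g| + Var g ∫_Q |f|)`, hence
`min (∫_Q |f|) (∫_Q |g|) ≤ 2r (Var f + Var g)`.

Averaging over the centre of `Q`, the integral of `min |⨍_Q f| |⨍_Q g|` is `O(r)`. Unlike a bound on
`|f| |g|`, this passes to the weak limit, because averages over a fixed cube converge; then `r → 0`
and Lebesgue differentiation give `min |f| |g| = 0` in the limit.
-/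

section SliceOscillation

variable {X Y Z F : Type*} [MeasurableSpace X] [MeasurableSpace Y] [MeasurableSpace Z]
  [NormedAddCommGroup F] {μ : Measure X} {ν : Measure Y} {τ : Measure Z}

/-- The total distance between the values of `f` on the slice `{x = a}` and all its values with the
same transverse coordinate `y`; it tests the variation of `f` in the variables `(x, z)` only. -/
def sliceOscillation (μ : Measure X) (ν : Measure Y) (τ : Measure Z) (f : Y × X × Z → F) (a : X) :
    ℝ≥0∞ :=
  ∫⁻ p : Y × Z, ∫⁻ q : X × Z, ‖f (p.1, q) - f (p.1, a, p.2)‖ₑ ∂μ.prod τ ∂ν.prod τ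

lemma measurePreserving_prod_swap_left (μ : Measure X) (ν : Measure Y) (τ : Measure Z)
    [SFinite μ] [SFinite ν] [SFinite τ] :
    MeasurePreserving (fun w : X × Y × Z => (w.2.1, w.1, w.2.2)) (μ.prod (ν.prod τ))
      (ν.prod (μ.prod τ)) :=
  (measurePreserving_prodAssoc ν μ τ).comp
    ((Measure.measurePreserving_swap.prod (MeasurePreserving.id τ)).comp
      ((measurePreserving_prodAssoc μ ν τ).symm _))

lemma sliceOscillation_ae_le_liminf [SFinite μ] [SFinite ν] [SFinite τ] {f : Y × X × Z → F}
    {fn : ℕ → Y × X × Z → F} (hfn : ∀ n, StronglyMeasurable (fn n))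
    (hlim : ∀ᵐ x ∂ν.prod (μ.prod τ), Tendsto (fn · x) atTop (𝓝 (f x))) :
    ∀ᵐ a ∂μ, sliceOscillation μ ν τ f a ≤
      liminf (fun n => sliceOscillation μ ν τ (fn n) a) atTop := by
  have lim_slice : ∀ᵐ a ∂μ, ∀ᵐ p ∂ν.prod τ,
      Tendsto (fun n => fn n (p.1, a, p.2)) atTop (𝓝 (f (p.1, a, p.2))) :=
    Measure.ae_ae_of_ae_prod
      ((measurePreserving_prod_swap_left μ ν τ).quasiMeasurePreserving.ae hlim)
  have lim_transverse : ∀ᵐ p ∂ν.prod τ, ∀ᵐ q ∂μ.prod τ,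
      Tendsto (fun n => fn n (p.1, q)) atTop (𝓝 (f (p.1, q))) :=
    Measure.quasiMeasurePreserving_fst.ae (Measure.ae_ae_of_ae_prod hlim)
  filter_upwards [lim_slice] with a ha
  have hmeas (n : ℕ) : Measurable fun w : (Y × Z) × X × Z =>
      ‖fn n (w.1.1, w.2) - fn n (w.1.1, a, w.1.2)‖ₑ :=
    (((hfn n).comp_measurable (by fun_prop)).sub
      ((hfn n).comp_measurable (by fun_prop))).enorm
  calc sliceOscillation μ ν τ f a
      ≤ ∫⁻ p : Y × Z, liminf (fun n => ∫⁻ q : X × Z,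
          ‖fn n (p.1, q) - fn n (p.1, a, p.2)‖ₑ ∂μ.prod τ) atTop ∂ν.prod τ := by
        refine lintegral_mono_ae ?_
        filter_upwards [ha, lim_transverse] with p hpa hp
        refine (lintegral_mono_ae ?_).trans
          (lintegral_liminf_le fun n => (hmeas n).comp measurable_prodMk_left)
        filter_upwards [hp] with q hq
        exact (hq.sub hpa).enorm.liminf_eq.ge
    _ ≤ _ := lintegral_liminf_le fun n => (hmeas n).lintegral_prod_right'

lemma measurable_lintegral_enorm_sub [SFinite μ] [SFinite τ] {f : Y × X × Z → F}
    (hf : StronglyMeasurable f) :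
    Measurable fun x : X × Y × Z => ∫⁻ q, ‖f (x.2.1, q) - f (x.2.1, x.1, x.2.2)‖ₑ ∂μ.prod τ :=
  Measurable.lintegral_prod_right' (f := fun w : (X × Y × Z) × X × Z =>
      ‖f (w.1.2.1, w.2) - f (w.1.2.1, w.1.1, w.1.2.2)‖ₑ)
    ((hf.comp_measurable (by fun_prop)).sub (hf.comp_measurable (by fun_prop))).enorm

lemma lintegral_mul_lintegral_enorm_sub_le [SFinite μ] [SFinite ν] [SFinite τ]
    {f : Y × X × Z → F} (hf : StronglyMeasurable f) {A : ℝ≥0∞}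
    (hA : ∀ᵐ a ∂μ, sliceOscillation μ ν τ f a ≤ A) {ψ : X → ℝ≥0∞} (hψ : Measurable ψ) :
    ∫⁻ x, ψ x.1 * ∫⁻ q, ‖f (x.2.1, q) - f (x.2.1, x.1, x.2.2)‖ₑ ∂μ.prod τ ∂μ.prod (ν.prod τ) ≤
      A * ∫⁻ a, ψ a ∂μ := by
  have hmeas := measurable_lintegral_enorm_sub (μ := μ) (τ := τ) hf
  rw [lintegral_prod _ (by fun_prop), ← lintegral_const_mul _ hψ]
  refine lintegral_mono_ae ?_
  filter_upwards [hA] with a ha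
  calc _ = ψ a * sliceOscillation μ ν τ f a :=
        lintegral_const_mul _ (hmeas.comp measurable_prodMk_left)
    _ ≤ A * ψ a := by rw [mul_comm]; gcongr

lemma lintegral_fst_mul_snd_fst [SFinite ν] [SFinite τ] {ψ : X → ℝ≥0∞}
    {φ : Y → ℝ≥0∞} (hψ : Measurable ψ) (hφ : Measurable φ) :
    ∫⁻ x, ψ x.1 * φ x.2.1 ∂μ.prod (ν.prod τ) =
      τ Set.univ * ((∫⁻ b, φ b ∂ν) * ∫⁻ a, ψ a ∂μ) := by
  rw [lintegral_prod_mul hψ.aemeasurable (g := fun q : Y × Z => φ q.1) (by fun_prop),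
    lintegral_prod _ (by fun_prop)]
  simp only [lintegral_const]
  rw [lintegral_mul_const _ hφ]
  ring

/-- If `f` vanishes at `(b, a, c)`, then the mass of `f` on the slice through `b` is the oscillation
of `f` around that point, and likewise for `g`; one of the two always happens. -/
lemma mul_lintegral_mul_lintegral_le_of_sliceOscillation_le [SFinite μ] [SFinite ν] [SFinite τ]
    {f : Y × X × Z → F} {g : X × Y × Z → F}
    (hf : StronglyMeasurable f) (hg : StronglyMeasurable g)
    (hfg : ∀ᵐ x ∂μ.prod (ν.prod τ), f (x.2.1, x.1, x.2.2) = 0 ∨ g x = 0) {A B : ℝ≥0∞}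
    (hA : ∀ᵐ a ∂μ, sliceOscillation μ ν τ f a ≤ A)
    (hB : ∀ᵐ b ∂ν, sliceOscillation ν μ τ g b ≤ B) :
    τ Set.univ * ((∫⁻ x, ‖f x‖ₑ ∂ν.prod (μ.prod τ)) * ∫⁻ x, ‖g x‖ₑ ∂μ.prod (ν.prod τ)) ≤
      A * (∫⁻ x, ‖g x‖ₑ ∂μ.prod (ν.prod τ)) + B * ∫⁻ x, ‖f x‖ₑ ∂ν.prod (μ.prod τ) := by
  let φ : Y → ℝ≥0∞ := fun b => ∫⁻ q, ‖f (b, q)‖ₑ ∂μ.prod τ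
  let ψ : X → ℝ≥0∞ := fun a => ∫⁻ q, ‖g (a, q)‖ₑ ∂ν.prod τ
  have hφ : Measurable φ := hf.enorm.lintegral_prod_right'
  have hψ : Measurable ψ := hg.enorm.lintegral_prod_right'
  let R : X × Y × Z → ℝ≥0∞ := fun x =>
    ∫⁻ q, ‖f (x.2.1, q) - f (x.2.1, x.1, x.2.2)‖ₑ ∂μ.prod τ
  let S : Y × X × Z → ℝ≥0∞ := fun y =>
    ∫⁻ q, ‖g (y.2.1, q) - g (y.2.1, y.1, y.2.2)‖ₑ ∂ν.prod τ
  have hS : Measurable S := measurable_lintegral_enorm_sub hg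
  have pointwise : ∀ᵐ x ∂μ.prod (ν.prod τ),
      ψ x.1 * φ x.2.1 ≤ ψ x.1 * R x + φ x.2.1 * S (x.2.1, x.1, x.2.2) := by
    filter_upwards [hfg] with x hx
    rcases hx with hfx | hgx
    · have : R x = φ x.2.1 := by simp [R, φ, hfx]
      exact this ▸ le_self_add
    · have : S (x.2.1, x.1, x.2.2) = ψ x.1 := by simp [S, ψ, hgx]
      rw [this, mul_comm (φ x.2.1)]
      exact le_add_self
  rw [lintegral_prod _ hf.enorm.aemeasurable, lintegral_prod _ hg.enorm.aemeasurable]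
  calc τ Set.univ * ((∫⁻ b, φ b ∂ν) * ∫⁻ a, ψ a ∂μ)
      = ∫⁻ x, ψ x.1 * φ x.2.1 ∂μ.prod (ν.prod τ) := (lintegral_fst_mul_snd_fst hψ hφ).symm
    _ ≤ ∫⁻ x, ψ x.1 * R x + φ x.2.1 * S (x.2.1, x.1, x.2.2) ∂μ.prod (ν.prod τ) :=
        lintegral_mono_ae pointwise
    _ = (∫⁻ x, ψ x.1 * R x ∂μ.prod (ν.prod τ)) + ∫⁻ y, φ y.1 * S y ∂ν.prod (μ.prod τ) := by
        rw [lintegral_add_right _ (by fun_prop),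
          ← (measurePreserving_prod_swap_left μ ν τ).lintegral_comp (by fun_prop)]
    _ ≤ A * (∫⁻ a, ψ a ∂μ) + B * ∫⁻ b, φ b ∂ν :=
        add_le_add (lintegral_mul_lintegral_enorm_sub_le hf hA hψ)
          (lintegral_mul_lintegral_enorm_sub_le hg hB hφ)

end SliceOscillation

lemma mul_min_le_add_of_mul_mul_le {T P Q A B : ℝ≥0∞} (hP : P ≠ ⊤) (hQ : Q ≠ ⊤)
    (h : T * (P * Q) ≤ A * Q + B * P) : T * min P Q ≤ A + B := by
  wlog hPQ : P ≤ Q generalizing P Q A B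
  · rw [min_comm, add_comm]
    exact this hQ hP (by rwa [mul_comm Q, add_comm]) (le_of_not_ge hPQ)
  rcases eq_or_ne Q 0 with rfl | hQ0
  · simp
  rw [min_eq_left hPQ, ← ENNReal.mul_le_mul_iff_left hQ0 hQ]
  calc T * P * Q ≤ A * Q + B * P := by rwa [mul_assoc]
    _ ≤ (A + B) * Q := by rw [add_mul]; gcongr

section SmoothSlices

variable {F : Type*} [NormedAddCommGroup F] [NormedSpace ℝ F]

lemma measurable_enorm_fderiv_apply {E : Type*} [NormedAddCommGroup E] [NormedSpace ℝ E]
    [MeasurableSpace E] [OpensMeasurableSpace E] {u : E → F} (hu : ContDiff ℝ 1 u) (v : E) :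
    Measurable fun x => ‖fderiv ℝ u x v‖ₑ :=
  ((hu.continuous_fderiv one_ne_zero).clm_apply continuous_const).enorm.measurable

lemma enorm_sub_le_lintegral_enorm_deriv {u : ℝ → F} (hu : ContDiff ℝ 1 u) {I : Set ℝ}
    (hI : I.OrdConnected) {a b : ℝ} (ha : a ∈ I) (hb : b ∈ I) :
    ‖u b - u a‖ₑ ≤ ∫⁻ t in I, ‖deriv u t‖ₑ := by
  wlog hab : a ≤ b generalizing a b
  · rw [enorm_sub_rev]
    exact this hb ha (le_of_not_ge hab)
  exact (enorm_sub_le_lintegral_deriv_of_contDiffOn_Icc hu.contDiffOn hab).trans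
    (lintegral_mono_set (hI.out ha hb))

lemma enorm_sub_le_lintegral_enorm_fderiv {u : ℝ × ℝ → F} (hu : ContDiff ℝ 1 u) {I J : Set ℝ}
    (hI : I.OrdConnected) (hJ : J.OrdConnected) {a a' c c' : ℝ} (ha : a ∈ I) (ha' : a' ∈ I)
    (hc : c ∈ J) (hc' : c' ∈ J) :
    ‖u (a', c') - u (a, c)‖ₑ ≤
      (∫⁻ t in J, ‖fderiv ℝ u (a', t) (0, 1)‖ₑ) + ∫⁻ t in I, ‖fderiv ℝ u (t, c) (1, 0)‖ₑ := by
  have hdiff : Differentiable ℝ u := hu.differentiable one_ne_zero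
  have vertical : ‖u (a', c') - u (a', c)‖ₑ ≤ ∫⁻ t in J, ‖fderiv ℝ u (a', t) (0, 1)‖ₑ := by
    convert enorm_sub_le_lintegral_enorm_deriv (u := fun t => u (a', t)) (by fun_prop) hJ hc hc'
      using 5 with t
    exact ((hdiff (a', t)).hasFDerivAt.comp_hasDerivAt t
      ((hasDerivAt_const t a').prodMk (hasDerivAt_id t))).deriv.symm
  have horizontal : ‖u (a', c) - u (a, c)‖ₑ ≤ ∫⁻ t in I, ‖fderiv ℝ u (t, c) (1, 0)‖ₑ := by
    convert enorm_sub_le_lintegral_enorm_deriv (u := fun t => u (t, c)) (by fun_prop) hI ha ha'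
      using 5 with t
    exact ((hdiff (t, c)).hasFDerivAt.comp_hasDerivAt t
      ((hasDerivAt_id t).prodMk (hasDerivAt_const t c))).deriv.symm
  rw [← sub_add_sub_cancel _ (u (a', c))]
  exact (enorm_add_le _ _).trans (add_le_add vertical horizontal)

lemma lintegral_lintegral_enorm_sub_le {u : ℝ × ℝ → F} (hu : ContDiff ℝ 1 u) {I J : Set ℝ}
    (hI : I.OrdConnected) (hJ : J.OrdConnected) {a : ℝ} (ha : a ∈ I) :
    ∫⁻ c in J, ∫⁻ q in I ×ˢ J, ‖u q - u (a, c)‖ₑ ≤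
      volume J * (volume I * (∫⁻ q in I ×ˢ J, ‖fderiv ℝ u q (1, 0)‖ₑ) +
        volume J * ∫⁻ q in I ×ˢ J, ‖fderiv ℝ u q (0, 1)‖ₑ) := by
  have hIm := hI.measurableSet
  have hJm := hJ.measurableSet
  have meas_fderiv := measurable_enorm_fderiv_apply hu
  let V : ℝ → ℝ≥0∞ := fun a' => ∫⁻ t in J, ‖fderiv ℝ u (a', t) (0, 1)‖ₑ
  let H : ℝ → ℝ≥0∞ := fun c => ∫⁻ t in I, ‖fderiv ℝ u (t, c) (1, 0)‖ₑ
  have hV : Measurable V := (meas_fderiv (0, 1)).lintegral_prod_right'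
  have hH : Measurable H := (meas_fderiv (1, 0)).lintegral_prod_left'
  calc ∫⁻ c in J, ∫⁻ q in I ×ˢ J, ‖u q - u (a, c)‖ₑ
      ≤ ∫⁻ c in J, ∫⁻ q in I ×ˢ J, V q.1 + H c :=
        setLIntegral_mono' hJm fun c hc => setLIntegral_mono' (hIm.prod hJm) fun q hq =>
          enorm_sub_le_lintegral_enorm_fderiv hu hI hJ ha hq.1 hc hq.2
    _ = ∫⁻ c in J, volume J * (∫⁻ a' in I, V a') + volume I * volume J * H c := by
        refine lintegral_congr fun c => ?_
        rw [lintegral_add_right _ measurable_const, Measure.volume_eq_prod,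
          ← Measure.prod_restrict, lintegral_prod _ (by fun_prop)]
        simp only [lintegral_const, Measure.restrict_apply_univ, Measure.prod_restrict,
          Measure.prod_prod, lintegral_mul_const _ hV]
        ring
    _ = volume J * (volume I * (∫⁻ c in J, H c) + volume J * ∫⁻ a' in I, V a') := by
        rw [lintegral_add_left measurable_const, lintegral_const_mul _ hH]
        simp only [lintegral_const, Measure.restrict_apply_univ]
        ring
    _ = _ := by
        rw [Measure.volume_eq_prod, ← Measure.prod_restrict,
          lintegral_prod_symm _ (meas_fderiv (1, 0)).aemeasurable,
          lintegral_prod _ (meas_fderiv (0, 1)).aemeasurable]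

lemma fderiv_comp_prodMk_left {E G : Type*} [NormedAddCommGroup E] [NormedSpace ℝ E]
    [NormedAddCommGroup G] [NormedSpace ℝ G] {f : E × G → F} {b : E} {q : G}
    (hf : DifferentiableAt ℝ f (b, q)) (w : G) :
    fderiv ℝ (fun q => f (b, q)) q w = fderiv ℝ f (b, q) (0, w) := by
  have h : HasFDerivAt (fun q => f (b, q)) (fderiv ℝ f (b, q) ∘L .inr ℝ E G) q :=
    hf.hasFDerivAt.comp q (hasFDerivAt_prodMk_right b q)
  rw [h.fderiv]
  rfl

lemma sliceOscillation_restrict_le {f : ℝ × ℝ × ℝ → F} (hf : ContDiff ℝ 1 f) {B I J : Set ℝ}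
    (hI : I.OrdConnected) (hJ : J.OrdConnected) {a : ℝ} (ha : a ∈ I) :
    sliceOscillation (volume.restrict I) (volume.restrict B) (volume.restrict J) f a ≤
      volume J * (volume I * (∫⁻ y in B ×ˢ I ×ˢ J, ‖fderiv ℝ f y (0, 1, 0)‖ₑ) +
        volume J * ∫⁻ y in B ×ˢ I ×ˢ J, ‖fderiv ℝ f y (0, 0, 1)‖ₑ) := by
  have meas_fderiv := measurable_enorm_fderiv_apply hf
  have lintegral_slices (v : ℝ × ℝ × ℝ) :
      ∫⁻ y in B ×ˢ I ×ˢ J, ‖fderiv ℝ f y v‖ₑ =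
        ∫⁻ b in B, ∫⁻ q in I ×ˢ J, ‖fderiv ℝ f (b, q) v‖ₑ := by
    rw [Measure.volume_eq_prod, ← Measure.prod_restrict,
      lintegral_prod _ (meas_fderiv v).aemeasurable]
  have meas_slices (v : ℝ × ℝ × ℝ) :
      Measurable fun b => ∫⁻ q in I ×ˢ J, ‖fderiv ℝ f (b, q) v‖ₑ :=
    (meas_fderiv v).lintegral_prod_right'
  have meas_osc : Measurable fun p : ℝ × ℝ =>
      ∫⁻ q in I ×ˢ J, ‖f (p.1, q) - f (p.1, a, p.2)‖ₑ := by
    have : Continuous fun w : (ℝ × ℝ) × ℝ × ℝ => ‖f (w.1.1, w.2) - f (w.1.1, a, w.1.2)‖ₑ := by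
      fun_prop
    exact this.measurable.lintegral_prod_right'
  calc sliceOscillation (volume.restrict I) (volume.restrict B) (volume.restrict J) f a
      = ∫⁻ b in B, ∫⁻ c in J, ∫⁻ q in I ×ˢ J, ‖f (b, q) - f (b, a, c)‖ₑ := by
        rw [sliceOscillation, Measure.prod_restrict I J, ← Measure.volume_eq_prod,
          lintegral_prod _ meas_osc.aemeasurable]
    _ ≤ ∫⁻ b in B, volume J *
          (volume I * (∫⁻ q in I ×ˢ J, ‖fderiv ℝ f (b, q) (0, 1, 0)‖ₑ) +
            volume J * ∫⁻ q in I ×ˢ J, ‖fderiv ℝ f (b, q) (0, 0, 1)‖ₑ) := by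
        refine lintegral_mono fun b => ?_
        simpa only [fderiv_comp_prodMk_left (hf.differentiable one_ne_zero _)] using
          lintegral_lintegral_enorm_sub_le (u := fun q => f (b, q)) (by fun_prop) hI hJ ha
    _ = _ := by
        have h₂ := meas_slices (0, 1, 0)
        have h₃ := meas_slices (0, 0, 1)
        rw [lintegral_const_mul _ (by fun_prop), lintegral_add_left (by fun_prop),
          lintegral_const_mul _ h₂, lintegral_const_mul _ h₃, lintegral_slices, lintegral_slices]

end SmoothSlices

section Cube

variable {F : Type*} [NormedAddCommGroup F] [NormedSpace ℝ F]

lemma volume_restrict_closedBall_prod (b a c r : ℝ) :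
    (volume : Measure (ℝ × ℝ × ℝ)).restrict (Metric.closedBall (b, a, c) r) =
      (volume.restrict (Metric.closedBall b r)).prod
        ((volume.restrict (Metric.closedBall a r)).prod
          (volume.restrict (Metric.closedBall c r))) := by
  rw [← closedBall_prod_same, ← closedBall_prod_same, Measure.prod_restrict, Measure.prod_restrict,
    ← Measure.volume_eq_prod, ← Measure.volume_eq_prod]

lemma sliceOscillation_closedBall_le {f : ℝ × ℝ × ℝ → F} (hf : ContDiff ℝ 1 f) {b a c r a' : ℝ}
    (ha' : a' ∈ Metric.closedBall a r) :
    sliceOscillation (volume.restrict (Metric.closedBall a r))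
        (volume.restrict (Metric.closedBall b r)) (volume.restrict (Metric.closedBall c r)) f a' ≤
      ENNReal.ofReal (2 * r) ^ 2 * ∫⁻ y in Metric.closedBall (b, a, c) r,
        (‖fderiv ℝ f y (0, 1, 0)‖ₑ + ‖fderiv ℝ f y (0, 0, 1)‖ₑ) := by
  have ordConnected_closedBall (t : ℝ) : (Metric.closedBall t r).OrdConnected :=
    Real.closedBall_eq_Icc ▸ Set.ordConnected_Icc
  refine (sliceOscillation_restrict_le hf (ordConnected_closedBall a) (ordConnected_closedBall c)
    ha').trans_eq ?_
  rw [closedBall_prod_same, closedBall_prod_same,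
    lintegral_add_left (measurable_enorm_fderiv_apply hf _), Real.volume_closedBall,
    Real.volume_closedBall]
  ring

lemma ae_sliceOscillation_closedBall_le_liminf {f : ℝ × ℝ × ℝ → F} {fn : ℕ → ℝ × ℝ × ℝ → F}
    (hfn : ∀ n, ContDiff ℝ 1 (fn n)) (hlim : ∀ᵐ y, Tendsto (fn · y) atTop (𝓝 (f y)))
    (b a c r : ℝ) :
    ∀ᵐ a' ∂volume.restrict (Metric.closedBall a r),
      sliceOscillation (volume.restrict (Metric.closedBall a r))
        (volume.restrict (Metric.closedBall b r)) (volume.restrict (Metric.closedBall c r)) f a' ≤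
      ENNReal.ofReal (2 * r) ^ 2 * liminf (fun n => ∫⁻ y in Metric.closedBall (b, a, c) r,
        (‖fderiv ℝ (fn n) y (0, 1, 0)‖ₑ + ‖fderiv ℝ (fn n) y (0, 0, 1)‖ₑ)) atTop := by
  have hlim_ball := volume_restrict_closedBall_prod b a c r ▸ ae_restrict_of_ae hlim
  filter_upwards [sliceOscillation_ae_le_liminf
    (fun n => (hfn n).continuous.stronglyMeasurable) hlim_ball,
    ae_restrict_mem measurableSet_closedBall] with a' hosc ha'
  refine hosc.trans ?_
  rw [← ENNReal.liminf_const_mul_of_ne_top (by finiteness)]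
  exact liminf_le_liminf (Eventually.of_forall fun n => sliceOscillation_closedBall_le (hfn n) ha')

/-- The exchange of the first two coordinates of `ℝ × ℝ × ℝ`. -/
def swapLeft : (ℝ × ℝ × ℝ) ≃L[ℝ] ℝ × ℝ × ℝ where
  toFun x := (x.2.1, x.1, x.2.2)
  invFun x := (x.2.1, x.1, x.2.2)
  map_add' _ _ := rfl
  map_smul' _ _ := rfl
  left_inv _ := rfl
  right_inv _ := rfl

lemma measurePreserving_swapLeft : MeasurePreserving swapLeft :=
  measurePreserving_prod_swap_left volume volume volume

lemma setLIntegral_closedBall_comp_swapLeft (h : ℝ × ℝ × ℝ → ℝ≥0∞) (b a c r : ℝ) :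
    ∫⁻ y in Metric.closedBall (b, a, c) r, h (swapLeft y) =
      ∫⁻ y in Metric.closedBall (a, b, c) r, h y := by
  have preimage_ball :
      swapLeft ⁻¹' Metric.closedBall (a, b, c) r = Metric.closedBall (b, a, c) r := by
    ext y
    simp only [Set.mem_preimage, ← closedBall_prod_same, Set.mem_prod, swapLeft]
    exact and_left_comm
  rw [← preimage_ball]
  exact measurePreserving_swapLeft.setLIntegral_comp_preimage_emb
    swapLeft.toHomeomorph.measurableEmbedding h _

lemma ae_sliceOscillation_comp_swapLeft_le_liminf {f : ℝ × ℝ × ℝ → F} {fn : ℕ → ℝ × ℝ × ℝ → F}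
    (hfn : ∀ n, ContDiff ℝ 1 (fn n)) (hlim : ∀ᵐ y, Tendsto (fn · y) atTop (𝓝 (f y)))
    (a b c r : ℝ) :
    ∀ᵐ a' ∂volume.restrict (Metric.closedBall a r),
      sliceOscillation (volume.restrict (Metric.closedBall a r))
        (volume.restrict (Metric.closedBall b r)) (volume.restrict (Metric.closedBall c r))
        (f ∘ swapLeft) a' ≤
      ENNReal.ofReal (2 * r) ^ 2 * liminf (fun n => ∫⁻ y in Metric.closedBall (a, b, c) r,
        (‖fderiv ℝ (fn n) y (1, 0, 0)‖ₑ + ‖fderiv ℝ (fn n) y (0, 0, 1)‖ₑ)) atTop := by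
  have variation_swap (n : ℕ) : ∫⁻ y in Metric.closedBall (b, a, c) r,
        (‖fderiv ℝ (fn n ∘ swapLeft) y (0, 1, 0)‖ₑ + ‖fderiv ℝ (fn n ∘ swapLeft) y (0, 0, 1)‖ₑ) =
      ∫⁻ y in Metric.closedBall (a, b, c) r,
        (‖fderiv ℝ (fn n) y (1, 0, 0)‖ₑ + ‖fderiv ℝ (fn n) y (0, 0, 1)‖ₑ) := by
    rw [← setLIntegral_closedBall_comp_swapLeft]
    simp only [swapLeft.comp_right_fderiv]
    rfl
  simpa only [variation_swap] using ae_sliceOscillation_closedBall_le_liminf (f := f ∘ swapLeft)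
    (fun n => (hfn n).comp swapLeft.contDiff)
    (measurePreserving_swapLeft.quasiMeasurePreserving.ae hlim) b a c r

lemma min_setLIntegral_closedBall_le_of_stronglyMeasurable {f g : ℝ × ℝ × ℝ → F}
    {fn gn : ℕ → ℝ × ℝ × ℝ → F} (hf : StronglyMeasurable f) (hg : StronglyMeasurable g)
    (hfg : ∀ᵐ y, f y = 0 ∨ g y = 0)
    (hfn : ∀ n, ContDiff ℝ 1 (fn n)) (hgn : ∀ n, ContDiff ℝ 1 (gn n))
    (hflim : ∀ᵐ y, Tendsto (fn · y) atTop (𝓝 (f y)))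
    (hglim : ∀ᵐ y, Tendsto (gn · y) atTop (𝓝 (g y))) (x : ℝ × ℝ × ℝ) {r : ℝ} (hr : 0 < r)
    (hfi : ∫⁻ y in Metric.closedBall x r, ‖f y‖ₑ ≠ ⊤)
    (hgi : ∫⁻ y in Metric.closedBall x r, ‖g y‖ₑ ≠ ⊤) :
    min (∫⁻ y in Metric.closedBall x r, ‖f y‖ₑ) (∫⁻ y in Metric.closedBall x r, ‖g y‖ₑ) ≤
      ENNReal.ofReal (2 * r) *
        (liminf (fun n => ∫⁻ y in Metric.closedBall x r,
            (‖fderiv ℝ (fn n) y (1, 0, 0)‖ₑ + ‖fderiv ℝ (fn n) y (0, 0, 1)‖ₑ)) atTop +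
          liminf (fun n => ∫⁻ y in Metric.closedBall x r,
            (‖fderiv ℝ (gn n) y (0, 1, 0)‖ₑ + ‖fderiv ℝ (gn n) y (0, 0, 1)‖ₑ)) atTop) := by
  obtain ⟨a, b, c⟩ := x
  have product_bound := mul_lintegral_mul_lintegral_le_of_sliceOscillation_le
    (hf.comp_measurable swapLeft.continuous.measurable) hg
    (volume_restrict_closedBall_prod a b c r ▸ ae_restrict_of_ae hfg)
    (ae_sliceOscillation_comp_swapLeft_le_liminf hfn hflim a b c r)
    (ae_sliceOscillation_closedBall_le_liminf hgn hglim a b c r)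
  simp only [← volume_restrict_closedBall_prod, Measure.restrict_apply_univ,
    Real.volume_closedBall, Function.comp_apply,
    setLIntegral_closedBall_comp_swapLeft fun y => ‖f y‖ₑ] at product_bound
  have hr' : ENNReal.ofReal (2 * r) ≠ 0 := by simpa using hr
  rw [← ENNReal.mul_le_mul_iff_right hr' ENNReal.ofReal_ne_top]
  refine (mul_min_le_add_of_mul_mul_le hfi hgi product_bound).trans_eq ?_
  ring

lemma min_setLIntegral_closedBall_le {f g : ℝ × ℝ × ℝ → F} {fn gn : ℕ → ℝ × ℝ × ℝ → F}
    (hf : LocallyIntegrable f) (hg : LocallyIntegrable g) (hfg : ∀ᵐ y, f y = 0 ∨ g y = 0)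
    (hfn : ∀ n, ContDiff ℝ 1 (fn n)) (hgn : ∀ n, ContDiff ℝ 1 (gn n))
    (hflim : ∀ᵐ y, Tendsto (fn · y) atTop (𝓝 (f y)))
    (hglim : ∀ᵐ y, Tendsto (gn · y) atTop (𝓝 (g y))) (x : ℝ × ℝ × ℝ) {r : ℝ} (hr : 0 < r) :
    min (∫⁻ y in Metric.closedBall x r, ‖f y‖ₑ) (∫⁻ y in Metric.closedBall x r, ‖g y‖ₑ) ≤
      ENNReal.ofReal (2 * r) *
        (liminf (fun n => ∫⁻ y in Metric.closedBall x r,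
            (‖fderiv ℝ (fn n) y (1, 0, 0)‖ₑ + ‖fderiv ℝ (fn n) y (0, 0, 1)‖ₑ)) atTop +
          liminf (fun n => ∫⁻ y in Metric.closedBall x r,
            (‖fderiv ℝ (gn n) y (0, 1, 0)‖ₑ + ‖fderiv ℝ (gn n) y (0, 0, 1)‖ₑ)) atTop) := by
  have finite {h : ℝ × ℝ × ℝ → F} (hh : LocallyIntegrable h) :
      ∫⁻ y in Metric.closedBall x r, ‖h y‖ₑ ≠ ⊤ :=
    (hh.integrableOn_isCompact (isCompact_closedBall x r)).hasFiniteIntegral.ne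
  obtain ⟨f', hf', hff'⟩ := hf.aestronglyMeasurable
  obtain ⟨g', hg', hgg'⟩ := hg.aestronglyMeasurable
  have hfi := finite hf
  have hgi := finite hg
  have hf_eq : ∫⁻ y in Metric.closedBall x r, ‖f y‖ₑ = ∫⁻ y in Metric.closedBall x r, ‖f' y‖ₑ :=
    lintegral_congr_ae (ae_restrict_of_ae (hff'.fun_comp (‖·‖ₑ)))
  have hg_eq : ∫⁻ y in Metric.closedBall x r, ‖g y‖ₑ = ∫⁻ y in Metric.closedBall x r, ‖g' y‖ₑ :=
    lintegral_congr_ae (ae_restrict_of_ae (hgg'.fun_comp (‖·‖ₑ)))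
  rw [hf_eq] at hfi ⊢
  rw [hg_eq] at hgi ⊢
  refine min_setLIntegral_closedBall_le_of_stronglyMeasurable hf' hg' ?_ hfn hgn ?_ ?_ x hr hfi hgi
  · filter_upwards [hff', hgg', hfg] with y hfy hgy hy using hfy ▸ hgy ▸ hy
  · filter_upwards [hff', hflim] with y hy hlim using hy ▸ hlim
  · filter_upwards [hgg', hglim] with y hy hlim using hy ▸ hlim

end Cube

lemma exists_integrable_integral_inner_eq {X F : Type*} [TopologicalSpace X] [T2Space X]
    [SecondCountableTopology X] [MeasurableSpace X] [OpensMeasurableSpace X] {μ : Measure X}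
    [IsFiniteMeasureOnCompacts μ] [NormedAddCommGroup F] [InnerProductSpace ℝ F] {G : X → F}
    (hG : Continuous G) {S : Set X} (hS : IsCompact S) :
    ∃ ψ : X → F, Integrable ψ μ ∧ (∀ x, ‖ψ x‖ ≤ 1) ∧ Function.support ψ ⊆ S ∧
      ∫ x, ⟪G x, ψ x⟫ ∂μ = ∫ x in S, ‖G x‖ ∂μ := by
  let ψ : X → F := S.indicator fun x => ‖G x‖⁻¹ • G x
  have norm_le_one (x : X) : ‖ψ x‖ ≤ 1 := by
    refine (norm_indicator_le_norm_self _ x).trans ?_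
    rw [norm_smul, norm_inv, norm_norm]
    exact inv_mul_le_one
  have hmeas : StronglyMeasurable ψ :=
    (hG.norm.measurable.inv.stronglyMeasurable.smul hG.stronglyMeasurable).indicator
      hS.measurableSet
  have inner_ψ (x : X) : ⟪G x, ψ x⟫ = S.indicator (fun x => ‖G x‖) x := by
    by_cases hx : x ∈ S
    · rcases eq_or_ne ‖G x‖ 0 with h | h
      · simp [ψ, hx, h]
      · simp only [ψ, Set.indicator_of_mem hx, real_inner_smul_right,
          real_inner_self_eq_norm_mul_norm, inv_mul_cancel_left₀ h]
    · simp [ψ, hx]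
  refine ⟨ψ, ?_, norm_le_one, Set.support_indicator_subset, ?_⟩
  · exact (Measure.integrableOn_of_bounded hS.measure_ne_top hmeas.aestronglyMeasurable
      (Eventually.of_forall norm_le_one)).integrable_of_forall_notMem_eq_zero
      fun x hx => Set.indicator_of_notMem hx _
  · simp only [inner_ψ, integral_indicator hS.measurableSet]

section DirectionalVariation

variable {E F : Type*} [NormedAddCommGroup E] [NormedSpace ℝ E]
  [NormedAddCommGroup F] [InnerProductSpace ℝ F]

/-- The test functions dual to the total variation on `U`: `C¹` maps with compact support in `U`
and values in the closed unit ball. -/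
structure IsUnitTestFunction (U : Set E) (φ : E → F) : Prop where
  contDiff : ContDiff ℝ 1 φ
  hasCompactSupport : HasCompactSupport φ
  tsupport_subset : tsupport φ ⊆ U
  norm_le_one : ∀ x, ‖φ x‖ ≤ 1

/-- The total variation on `U` of the distributional derivative of `f` in the direction `v`,
defined by duality. -/
def directionalVariation [MeasurableSpace E] (μ : Measure E) (U : Set E) (v : E) (f : E → F) :
    ℝ≥0∞ :=
  ⨆ φ : {φ : E → F // IsUnitTestFunction U φ},
    ENNReal.ofReal (∫ x in U, ⟪f x, fderiv ℝ φ.1 x v⟫ ∂μ)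

/-- The sum of the variations of `f` on `U` in the directions `v` and `w`; for independent `v` and
`w` it is comparable to the total variation of the derivative along the plane they span. -/
def planarVariation [MeasurableSpace E] (μ : Measure E) (U : Set E) (v w : E) (f : E → F) :
    ℝ≥0∞ :=
  directionalVariation μ U v f + directionalVariation μ U w f

lemma integral_inner_fderiv_le_directionalVariation [MeasurableSpace E] {μ : Measure E}
    {f φ : E → F} {U : Set E} (hφ : IsUnitTestFunction U φ) (v : E) :
    ENNReal.ofReal (∫ x, ⟪f x, fderiv ℝ φ x v⟫ ∂μ) ≤ directionalVariation μ U v f := by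
  rw [← setIntegral_eq_integral_of_forall_compl_eq_zero (s := U)]
  · exact le_iSup (fun φ : {φ : E → F // IsUnitTestFunction U φ} =>
      ENNReal.ofReal (∫ x in U, ⟪f x, fderiv ℝ φ.1 x v⟫ ∂μ)) ⟨φ, hφ⟩
  · intro x hx
    rw [fderiv_of_notMem_tsupport ℝ (fun h => hx (hφ.tsupport_subset h))]
    simp

section Mollification

lemma fderiv_normed_neg [FiniteDimensional ℝ E] [MeasurableSpace E] {μ : Measure E}
    (ρ : ContDiffBump (0 : E)) (z v : E) :
    fderiv ℝ (ρ.normed μ) (-z) v = -fderiv ℝ (ρ.normed μ) z v := by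
  have even : (fun y => ρ.normed μ (-y)) = ρ.normed μ := funext ρ.normed_neg
  have h : HasFDerivAt (fun y => ρ.normed μ (-y)) (fderiv ℝ (ρ.normed μ) (-z) ∘L (-.id ℝ E)) z :=
    (ρ.contDiff_normed.differentiable one_ne_zero (-z)).hasFDerivAt.comp z (hasFDerivAt_id z).neg
  rw [even] at h
  rw [h.fderiv]
  simp

variable [FiniteDimensional ℝ E] [MeasurableSpace E] [BorelSpace E]
  {μ : Measure E} [μ.IsAddHaarMeasure] (ρ : ContDiffBump (0 : E))

/-- The mollification of `f` by the normalised bump function `ρ`. -/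
def mollify (μ : Measure E) (ρ : ContDiffBump (0 : E)) (f : E → F) : E → F :=
  convolution (ρ.normed μ) f (ContinuousLinearMap.lsmul ℝ ℝ) μ

lemma contDiff_mollify {f : E → F} (hf : LocallyIntegrable f μ) : ContDiff ℝ 1 (mollify μ ρ f) :=
  ρ.hasCompactSupport_normed.contDiff_convolution_left _ ρ.contDiff_normed hf

lemma fderiv_mollify_apply {f : E → F} (hf : LocallyIntegrable f μ) (x v : E) :
    fderiv ℝ (mollify μ ρ f) x v = ∫ t, fderiv ℝ (ρ.normed μ) (x - t) v • f t ∂μ := by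
  have hρ : ContDiff ℝ 1 (ρ.normed μ) := ρ.contDiff_normed
  rw [mollify, ← convolution_flip, (ρ.hasCompactSupport_normed.hasFDerivAt_convolution_right _ hf
      hρ x).fderiv, convolution_precompR_apply _ hf (ρ.hasCompactSupport_normed.fderiv ℝ)
    (hρ.continuous_fderiv one_ne_zero)]
  rfl

lemma norm_mollify_le_one {f : E → F} (hf : ∀ x, ‖f x‖ ≤ 1) (x : E) : ‖mollify μ ρ f x‖ ≤ 1 := by
  rw [mollify, convolution_def, ← ρ.integral_normed (μ := μ)]
  refine norm_integral_le_of_norm_le ρ.integrable_normed (Eventually.of_forall fun t => ?_)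
  rw [ContinuousLinearMap.lsmul_apply, norm_smul, Real.norm_of_nonneg (ρ.nonneg_normed t)]
  exact mul_le_of_le_one_right (ρ.nonneg_normed t) (hf _)

lemma support_mollify_subset {f : E → F} {S : Set E} (hS : IsCompact S)
    (hf : Function.support f ⊆ S) :
    Function.support (mollify μ ρ f) ⊆ Metric.cthickening ρ.rOut S := by
  rw [← hS.add_closedBall_zero ρ.rOut_pos.le]
  refine (support_convolution_subset_swap _).trans (Set.add_subset_add hf ?_)
  rw [ρ.support_normed_eq]
  exact Metric.ball_subset_closedBall

lemma isUnitTestFunction_mollify {ψ : E → F} (hψ : LocallyIntegrable ψ μ) (hψ₁ : ∀ x, ‖ψ x‖ ≤ 1)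
    {S U : Set E} (hS : IsCompact S) (hψS : Function.support ψ ⊆ S)
    (hSU : Metric.cthickening ρ.rOut S ⊆ U) : IsUnitTestFunction U (mollify μ ρ ψ) where
  contDiff := contDiff_mollify ρ hψ
  hasCompactSupport :=
    .of_support_subset_isCompact hS.cthickening (support_mollify_subset ρ hS hψS)
  tsupport_subset := (closure_minimal (support_mollify_subset ρ hS hψS)
    hS.cthickening.isClosed).trans hSU
  norm_le_one := norm_mollify_le_one ρ hψ₁

lemma integral_inner_fderiv_mollify [CompleteSpace F] {f ψ : E → F} (hf : Integrable f μ)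
    (hψ : Integrable ψ μ) (v : E) :
    ∫ x, ⟪f x, fderiv ℝ (mollify μ ρ ψ) x v⟫ ∂μ =
      -∫ x, ⟪fderiv ℝ (mollify μ ρ f) x v, ψ x⟫ ∂μ := by
  let D : E → ℝ := fun z => fderiv ℝ (ρ.normed μ) z v
  have hDc : Continuous D :=
    (ρ.contDiff_normed.continuous_fderiv one_ne_zero).clm_apply continuous_const
  have hDs : HasCompactSupport D := ρ.hasCompactSupport_normed.fderiv_apply ℝ v
  obtain ⟨C, hC⟩ := hDc.bounded_above_of_compact_support hDs
  have integrable_kernel_smul {g : E → F} (hg : Integrable g μ) {k : E → E} (hk : Continuous k) :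
      Integrable (fun t => D (k t) • g t) μ :=
    hg.bdd_smul C (hDc.comp hk).aestronglyMeasurable (Eventually.of_forall fun _ => hC _)
  have integrable_kernel_inner :
      Integrable (fun q : E × E => D (q.1 - q.2) * ⟪f q.1, ψ q.2⟫) (μ.prod μ) :=
    (hf.op_fst_snd (op := inner ℝ) continuous_inner
      ⟨1, by simpa using norm_inner_le_norm (𝕜 := ℝ)⟩ hψ).bdd_mul
      (hDc.comp (by fun_prop)).aestronglyMeasurable (Eventually.of_forall fun _ => hC _)
  calc ∫ x, ⟪f x, fderiv ℝ (mollify μ ρ ψ) x v⟫ ∂μ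
      = ∫ x, ∫ t, D (x - t) * ⟪f x, ψ t⟫ ∂μ ∂μ := by
        refine integral_congr_ae (Eventually.of_forall fun x => ?_)
        simp only [fderiv_mollify_apply ρ hψ.locallyIntegrable, ← real_inner_smul_right]
        exact (integral_inner (integrable_kernel_smul hψ (by fun_prop)) _).symm
    _ = ∫ t, ∫ x, D (x - t) * ⟪f x, ψ t⟫ ∂μ ∂μ := integral_integral_swap integrable_kernel_inner
    _ = ∫ t, -⟪fderiv ℝ (mollify μ ρ f) t v, ψ t⟫ ∂μ := by
        refine integral_congr_ae (Eventually.of_forall fun t => ?_)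
        have odd (x : E) : D (x - t) = -D (t - x) := by
          rw [← neg_sub t x]
          exact fderiv_normed_neg ρ _ _
        simp only [fderiv_mollify_apply ρ hf.locallyIntegrable, odd, neg_mul, integral_neg,
          real_inner_comm (ψ t), ← real_inner_smul_right]
        exact congrArg _ (integral_inner (integrable_kernel_smul hf (by fun_prop)) _)
    _ = _ := integral_neg _

lemma setLIntegral_enorm_fderiv_mollify_le [CompleteSpace F] {f : E → F} (hf : Integrable f μ)
    {S U : Set E} (hS : IsCompact S) (hSU : Metric.cthickening ρ.rOut S ⊆ U) (v : E) :
    ∫⁻ x in S, ‖fderiv ℝ (mollify μ ρ f) x v‖ₑ ∂μ ≤ directionalVariation μ U v f := by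
  let G : E → F := fun x => fderiv ℝ (mollify μ ρ f) x v
  have hG : Continuous G :=
    ((contDiff_mollify ρ hf.locallyIntegrable).continuous_fderiv one_ne_zero).clm_apply
      continuous_const
  obtain ⟨ψ, hψ, hψ₁, hψS, inner_ψ⟩ := exists_integrable_integral_inner_eq (μ := μ) hG.neg hS
  calc ∫⁻ x in S, ‖G x‖ₑ ∂μ = ENNReal.ofReal (∫ x in S, ‖G x‖ ∂μ) :=
        (ofReal_integral_norm_eq_lintegral_enorm (hG.continuousOn.integrableOn_compact hS)).symm
    _ = ENNReal.ofReal (∫ x, ⟪f x, fderiv ℝ (mollify μ ρ ψ) x v⟫ ∂μ) := by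
        rw [integral_inner_fderiv_mollify ρ hf hψ, ← integral_neg]
        simpa only [Pi.neg_apply, norm_neg, inner_neg_left] using
          congrArg ENNReal.ofReal inner_ψ.symm
    _ ≤ directionalVariation μ U v f := integral_inner_fderiv_le_directionalVariation
        (isUnitTestFunction_mollify ρ hψ.locallyIntegrable hψ₁ hS hψS hSU) v

lemma exists_contDiff_tendsto_setLIntegral_fderiv_le [CompleteSpace F] {f : E → F}
    (hf : Integrable f μ) :
    ∃ fn : ℕ → E → F, (∀ n, ContDiff ℝ 1 (fn n)) ∧
      (∀ᵐ x ∂μ, Tendsto (fn · x) atTop (𝓝 (f x))) ∧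
      ∀ (U S : Set E) (v : E), IsOpen U → IsCompact S → S ⊆ U →
        ∀ᶠ n in atTop, ∫⁻ x in S, ‖fderiv ℝ (fn n) x v‖ₑ ∂μ ≤ directionalVariation μ U v f := by
  let ρ : ℕ → ContDiffBump (0 : E) := fun n =>
    { rIn := 1 / ((n : ℝ) + 1)
      rOut := 2 * (1 / ((n : ℝ) + 1))
      rIn_pos := Nat.one_div_pos_of_nat
      rIn_lt_rOut := lt_two_mul_self Nat.one_div_pos_of_nat }
  have hρ : Tendsto (fun n => (ρ n).rOut) atTop (𝓝 0) := by
    simpa only [mul_zero] using tendsto_one_div_add_atTop_nhds_zero_nat.const_mul (2 : ℝ)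
  refine ⟨fun n => mollify μ (ρ n) f, fun n => contDiff_mollify (ρ n) hf.locallyIntegrable,
    ContDiffBump.ae_convolution_tendsto_right_of_locallyIntegrable hρ
      (Eventually.of_forall fun n => le_rfl) hf.locallyIntegrable, fun U S v hU hS hSU => ?_⟩
  obtain ⟨δ, hδ, hδU⟩ := hS.exists_cthickening_subset_open hU hSU
  filter_upwards [hρ.eventually_le_const hδ] with n hn
  exact setLIntegral_enorm_fderiv_mollify_le (ρ n) hf hS
    ((Metric.cthickening_mono hn S).trans hδU) v

end Mollification

end DirectionalVariation

section BallAverages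

variable {E F : Type*} [NormedAddCommGroup E] [MeasurableSpace E] [BorelSpace E]
  {μ : Measure E} [μ.IsAddLeftInvariant]

lemma setLIntegral_closedBall_eq (h : E → ℝ≥0∞) (x : E) (r : ℝ) :
    ∫⁻ y in Metric.closedBall x r, h y ∂μ = ∫⁻ z in Metric.closedBall 0 r, h (x + z) ∂μ := by
  rw [← (measurePreserving_add_left μ x).setLIntegral_comp_preimage_emb
    (measurableEmbedding_addLeft x), preimage_add_closedBall, sub_self]

lemma measure_closedBall_eq (x : E) (r : ℝ) :
    μ (Metric.closedBall x r) = μ (Metric.closedBall 0 r) := by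
  simpa using setLIntegral_closedBall_eq (μ := μ) 1 x r

variable [NormedAddCommGroup F] [NormedSpace ℝ F]

lemma enorm_average_closedBall_le (f : E → F) (x : E) (r : ℝ) :
    ‖⨍ y in Metric.closedBall x r, f y ∂μ‖ₑ ≤
      (μ (Metric.closedBall 0 r))⁻¹ * ∫⁻ y in Metric.closedBall x r, ‖f y‖ₑ ∂μ := by
  refine (enorm_integral_le_lintegral_enorm _).trans_eq ?_
  rw [lintegral_smul_measure, Measure.restrict_apply_univ, measure_closedBall_eq, smul_eq_mul]

variable [SecondCountableTopology E] [SFinite μ]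

lemma measurable_setLIntegral_closedBall {h : E → ℝ≥0∞} (hh : Measurable h) (r : ℝ) :
    Measurable fun x => ∫⁻ y in Metric.closedBall x r, h y ∂μ := by
  rw [funext fun x => setLIntegral_closedBall_eq h x r]
  exact (hh.comp measurable_add).lintegral_prod_right'

lemma aestronglyMeasurable_average_closedBall {f : E → F} (hf : AEStronglyMeasurable f μ) (r : ℝ) :
    AEStronglyMeasurable (fun x => ⨍ y in Metric.closedBall x r, f y ∂μ) μ := by
  have translate (x : E) : ⨍ y in Metric.closedBall x r, f y ∂μ =
      (μ.real (Metric.closedBall 0 r))⁻¹ • ∫ z in Metric.closedBall 0 r, f (x + z) ∂μ := by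
    rw [setAverage_eq, measureReal_def, measure_closedBall_eq, ← measureReal_def,
      ← (measurePreserving_add_left μ x).setIntegral_preimage_emb
      (measurableEmbedding_addLeft x), preimage_add_closedBall, sub_self]
  have hadd : Measure.QuasiMeasurePreserving (fun q : E × E => q.1 + q.2)
      (μ.prod (μ.restrict (Metric.closedBall 0 r))) μ :=
    (quasiMeasurePreserving_add _ _).mono_left
      (Measure.AbsolutelyContinuous.rfl.prod Measure.restrict_le_self.absolutelyContinuous)
  rw [funext translate]
  exact (hf.comp_quasiMeasurePreserving hadd).integral_prod_right'.const_smul _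

lemma setLIntegral_setLIntegral_closedBall_le {h : E → ℝ≥0∞} (hh : Measurable h)
    (S : Set E) (r : ℝ) :
    ∫⁻ x in S, ∫⁻ y in Metric.closedBall x r, h y ∂μ ∂μ ≤
      μ (Metric.closedBall 0 r) * ∫⁻ y in Metric.cthickening r S, h y ∂μ := by
  have hT : MeasurableSet (Metric.cthickening r S) := Metric.isClosed_cthickening.measurableSet
  calc ∫⁻ x in S, ∫⁻ y in Metric.closedBall x r, h y ∂μ ∂μ
      = ∫⁻ z in Metric.closedBall 0 r, ∫⁻ x in S, h (x + z) ∂μ ∂μ := by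
        rw [funext fun x => setLIntegral_closedBall_eq h x r]
        exact lintegral_lintegral_swap (hh.comp measurable_add).aemeasurable
    _ ≤ ∫⁻ _ in Metric.closedBall 0 r, ∫⁻ y in Metric.cthickening r S, h y ∂μ ∂μ := by
        refine setLIntegral_mono' measurableSet_closedBall fun z hz => ?_
        rw [← (measurePreserving_add_right μ z).setLIntegral_comp_preimage hT hh]
        refine lintegral_mono_set fun x hx => Metric.mem_cthickening_of_dist_le (x + z) x r S hx ?_
        simpa using hz
    _ = _ := by rw [setLIntegral_const, mul_comm]

lemma setLIntegral_liminf_setLIntegral_closedBall_le [NormedSpace ℝ E] {fn : ℕ → E → F}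
    (hfn : ∀ n, ContDiff ℝ 1 (fn n)) {S : Set E} {r : ℝ} {v w : E} {A B : ℝ≥0∞}
    (hA : ∀ᶠ n in atTop, ∫⁻ x in Metric.cthickening r S, ‖fderiv ℝ (fn n) x v‖ₑ ∂μ ≤ A)
    (hB : ∀ᶠ n in atTop, ∫⁻ x in Metric.cthickening r S, ‖fderiv ℝ (fn n) x w‖ₑ ∂μ ≤ B) :
    ∫⁻ x in S, liminf (fun n => ∫⁻ y in Metric.closedBall x r,
        (‖fderiv ℝ (fn n) y v‖ₑ + ‖fderiv ℝ (fn n) y w‖ₑ) ∂μ) atTop ∂μ ≤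
      μ (Metric.closedBall 0 r) * (A + B) := by
  have hmeas (n : ℕ) : Measurable fun y => ‖fderiv ℝ (fn n) y v‖ₑ + ‖fderiv ℝ (fn n) y w‖ₑ :=
    (measurable_enorm_fderiv_apply (hfn n) v).add (measurable_enorm_fderiv_apply (hfn n) w)
  refine (lintegral_liminf_le fun n => measurable_setLIntegral_closedBall (hmeas n) r).trans ?_
  refine liminf_le_of_frequently_le' (Eventually.frequently ?_)
  filter_upwards [hA, hB] with n hnA hnB
  refine (setLIntegral_setLIntegral_closedBall_le (hmeas n) S r).trans ?_
  rw [lintegral_add_left (measurable_enorm_fderiv_apply (hfn n) v)]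
  gcongr

end BallAverages

section CubeAverages

variable {F : Type*} [NormedAddCommGroup F] [InnerProductSpace ℝ F] [CompleteSpace F]

instance isAddHaarMeasure_volume_prod : (volume : Measure (ℝ × ℝ × ℝ)).IsAddHaarMeasure :=
  Measure.prod.instIsAddHaarMeasure _ _

lemma setLIntegral_min_setLIntegral_closedBall_le {f g : ℝ × ℝ × ℝ → F}
    (hf : Integrable f) (hg : Integrable g) (hfg : ∀ᵐ y, f y = 0 ∨ g y = 0)
    {U S : Set (ℝ × ℝ × ℝ)} (hU : IsOpen U) (hS : IsCompact S) {r : ℝ} (hr : 0 < r)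
    (hSU : Metric.cthickening r S ⊆ U) :
    ∫⁻ x in S, min (∫⁻ y in Metric.closedBall x r, ‖f y‖ₑ)
        (∫⁻ y in Metric.closedBall x r, ‖g y‖ₑ) ≤
      ENNReal.ofReal (2 * r) * (volume (Metric.closedBall (0 : ℝ × ℝ × ℝ) r) *
        (planarVariation volume U (1, 0, 0) (0, 0, 1) f +
          planarVariation volume U (0, 1, 0) (0, 0, 1) g)) := by
  obtain ⟨fn, hfn, hflim, hfvar⟩ := exists_contDiff_tendsto_setLIntegral_fderiv_le hf
  obtain ⟨gn, hgn, hglim, hgvar⟩ := exists_contDiff_tendsto_setLIntegral_fderiv_le hg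
  have hfbound := setLIntegral_liminf_setLIntegral_closedBall_le hfn
    (hfvar U _ (1, 0, 0) hU hS.cthickening hSU) (hfvar U _ (0, 0, 1) hU hS.cthickening hSU)
  have hgbound := setLIntegral_liminf_setLIntegral_closedBall_le hgn
    (hgvar U _ (0, 1, 0) hU hS.cthickening hSU) (hgvar U _ (0, 0, 1) hU hS.cthickening hSU)
  refine (lintegral_mono fun x => min_setLIntegral_closedBall_le hf.locallyIntegrable
    hg.locallyIntegrable hfg hfn hgn hflim hglim x hr).trans ?_
  rw [lintegral_const_mul' _ _ ENNReal.ofReal_ne_top, lintegral_add_left, mul_add (volume _)]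
  · gcongr
    exacts [hfbound, hgbound]
  · exact .liminf fun n => measurable_setLIntegral_closedBall
      ((measurable_enorm_fderiv_apply (hfn n) _).add (measurable_enorm_fderiv_apply (hfn n) _)) r

lemma setLIntegral_min_enorm_average_closedBall_le {f g : ℝ × ℝ × ℝ → F}
    (hf : Integrable f) (hg : Integrable g) (hfg : ∀ᵐ y, f y = 0 ∨ g y = 0)
    {U S : Set (ℝ × ℝ × ℝ)} (hU : IsOpen U) (hS : IsCompact S) {r : ℝ} (hr : 0 < r)
    (hSU : Metric.cthickening r S ⊆ U) :
    ∫⁻ x in S, min ‖⨍ y in Metric.closedBall x r, f y‖ₑ ‖⨍ y in Metric.closedBall x r, g y‖ₑ ≤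
      ENNReal.ofReal (2 * r) *
        (planarVariation volume U (1, 0, 0) (0, 0, 1) f +
          planarVariation volume U (0, 1, 0) (0, 0, 1) g) := by
  let β : ℝ≥0∞ := volume (Metric.closedBall (0 : ℝ × ℝ × ℝ) r)
  have hβ₀ : β ≠ 0 := (Metric.measure_closedBall_pos _ _ hr).ne'
  have hβ : β ≠ ⊤ := measure_closedBall_lt_top.ne
  calc ∫⁻ x in S, min ‖⨍ y in Metric.closedBall x r, f y‖ₑ ‖⨍ y in Metric.closedBall x r, g y‖ₑ
      ≤ ∫⁻ x in S, β⁻¹ * min (∫⁻ y in Metric.closedBall x r, ‖f y‖ₑ)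
          (∫⁻ y in Metric.closedBall x r, ‖g y‖ₑ) := by
        refine lintegral_mono fun x => ?_
        rw [mul_min]
        exact min_le_min (enorm_average_closedBall_le f x r) (enorm_average_closedBall_le g x r)
    _ ≤ β⁻¹ * (ENNReal.ofReal (2 * r) * (β * _)) := by
        rw [lintegral_const_mul' _ _ (ENNReal.inv_ne_top.2 hβ₀)]
        gcongr
        exact setLIntegral_min_setLIntegral_closedBall_le hf hg hfg hU hS hr hSU
    _ = _ := by rw [mul_left_comm (ENNReal.ofReal _), ENNReal.inv_mul_cancel_left hβ₀ hβ]

end CubeAverages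

section WeakLimit

lemma lintegral_min_enorm_le_liminf {X F : Type*} [MeasurableSpace X] [NormedAddCommGroup F]
    {μ : Measure X} {u v : ℕ → X → F} {u₀ v₀ : X → F}
    (hu : ∀ n, AEStronglyMeasurable (u n) μ) (hv : ∀ n, AEStronglyMeasurable (v n) μ)
    (hulim : ∀ᵐ x ∂μ, Tendsto (u · x) atTop (𝓝 (u₀ x)))
    (hvlim : ∀ᵐ x ∂μ, Tendsto (v · x) atTop (𝓝 (v₀ x))) :
    ∫⁻ x, min ‖u₀ x‖ₑ ‖v₀ x‖ₑ ∂μ ≤ liminf (fun n => ∫⁻ x, min ‖u n x‖ₑ ‖v n x‖ₑ ∂μ) atTop := by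
  refine (lintegral_congr_ae ?_).trans_le
    (lintegral_liminf_le' fun n => (hu n).enorm.min (hv n).enorm)
  filter_upwards [hulim, hvlim] with x hux hvx
  exact (hux.enorm.min hvx.enorm).liminf_eq.symm

lemma ae_restrict_of_forall_isCompact {X : Type*} [TopologicalSpace X]
    [SecondCountableTopology X] [LocallyCompactSpace X] [MeasurableSpace X] [OpensMeasurableSpace X]
    {μ : Measure X} {U : Set X} (hU : IsOpen U) {P : X → Prop}
    (h : ∀ S, IsCompact S → S ⊆ U → ∀ᵐ x ∂μ.restrict S, P x) : ∀ᵐ x ∂μ.restrict U, P x := by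
  rw [ae_restrict_iff' hU.measurableSet]
  refine measure_null_of_locally_null _ fun x hx => ?_
  obtain ⟨hxU, -⟩ := Classical.not_imp.1 hx
  obtain ⟨S, hS, hxS, hSU⟩ := exists_compact_subset hU hxU
  have ae_interior : ∀ᵐ y ∂μ, y ∈ interior S → P y :=
    (ae_restrict_iff' isOpen_interior.measurableSet).1
      (ae_restrict_of_ae_restrict_of_subset interior_subset (h S hS hSU))
  refine ⟨_, inter_mem (mem_nhdsWithin_of_mem_nhds (isOpen_interior.mem_nhds hxS))
    self_mem_nhdsWithin, measure_mono_null ?_ (ae_iff.1 ae_interior)⟩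
  exact fun y hy hP => hy.2 fun _ => hP hy.1

variable {F : Type*} [NormedAddCommGroup F] [InnerProductSpace ℝ F] [CompleteSpace F]
  {f g : ℕ → ℝ × ℝ × ℝ → F} {f₀ g₀ : ℝ × ℝ × ℝ → F} {U : Set (ℝ × ℝ × ℝ)} {C : ℝ≥0∞}

lemma setLIntegral_min_enorm_average_closedBall_le_of_tendsto
    (hf : ∀ k, Integrable (f k)) (hg : ∀ k, Integrable (g k))
    (hfg : ∀ k, ∀ᵐ y, f k y = 0 ∨ g k y = 0) (hU : IsOpen U)
    (hC : ∀ k, planarVariation volume U (1, 0, 0) (0, 0, 1) (f k) +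
      planarVariation volume U (0, 1, 0) (0, 0, 1) (g k) ≤ C)
    (hflim : ∀ x r, Tendsto (fun k => ∫ y in Metric.closedBall x r, f k y) atTop
      (𝓝 (∫ y in Metric.closedBall x r, f₀ y)))
    (hglim : ∀ x r, Tendsto (fun k => ∫ y in Metric.closedBall x r, g k y) atTop
      (𝓝 (∫ y in Metric.closedBall x r, g₀ y)))
    {S : Set (ℝ × ℝ × ℝ)} (hS : IsCompact S) {r : ℝ} (hr : 0 < r)
    (hSU : Metric.cthickening r S ⊆ U) :
    ∫⁻ x in S, min ‖⨍ y in Metric.closedBall x r, f₀ y‖ₑ ‖⨍ y in Metric.closedBall x r, g₀ y‖ₑ ≤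
      ENNReal.ofReal (2 * r) * C := by
  refine (lintegral_min_enorm_le_liminf
    (fun k => (aestronglyMeasurable_average_closedBall (hf k).1 r).restrict)
    (fun k => (aestronglyMeasurable_average_closedBall (hg k).1 r).restrict)
    (Eventually.of_forall fun x => ?_) (Eventually.of_forall fun x => ?_)).trans ?_
  · simpa only [setAverage_eq] using (hflim x r).const_smul _
  · simpa only [setAverage_eq] using (hglim x r).const_smul _
  · refine liminf_le_of_le (h := fun b hb => ?_)
    obtain ⟨k, hk⟩ := hb.exists
    refine (hk.trans (setLIntegral_min_enorm_average_closedBall_le (hf k) (hg k) (hfg k) hU hS hr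
      hSU)).trans ?_
    gcongr
    exact hC k

lemma ae_restrict_eq_zero_or_eq_zero_of_tendsto
    (hf : ∀ k, Integrable (f k)) (hg : ∀ k, Integrable (g k))
    (hfg : ∀ k, ∀ᵐ y, f k y = 0 ∨ g k y = 0) (hU : IsOpen U) (hC₀ : C ≠ ⊤)
    (hC : ∀ k, planarVariation volume U (1, 0, 0) (0, 0, 1) (f k) +
      planarVariation volume U (0, 1, 0) (0, 0, 1) (g k) ≤ C)
    (hf₀ : Integrable f₀) (hg₀ : Integrable g₀)
    (hflim : ∀ x r, Tendsto (fun k => ∫ y in Metric.closedBall x r, f k y) atTop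
      (𝓝 (∫ y in Metric.closedBall x r, f₀ y)))
    (hglim : ∀ x r, Tendsto (fun k => ∫ y in Metric.closedBall x r, g k y) atTop
      (𝓝 (∫ y in Metric.closedBall x r, g₀ y))) :
    ∀ᵐ x ∂volume.restrict U, f₀ x = 0 ∨ g₀ x = 0 := by
  refine ae_restrict_of_forall_isCompact hU fun S hS hSU => ?_
  obtain ⟨δ, hδ, hδU⟩ := hS.exists_cthickening_subset_open hU hSU
  obtain ⟨r, -, hr_mem, hr_lim⟩ := exists_seq_strictAnti_tendsto' hδ
  have tendsto_average {h : ℝ × ℝ × ℝ → F} (hh : Integrable h) : ∀ᵐ x ∂volume.restrict S,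
      Tendsto (fun n => ⨍ y in Metric.closedBall x (r n), h y) atTop (𝓝 (h x)) := by
    filter_upwards [ae_restrict_of_ae
      (IsUnifLocDoublingMeasure.ae_tendsto_average volume hh.locallyIntegrable 1)] with x hx
    exact hx (fun _ => x) r
      (tendsto_nhdsWithin_iff.2 ⟨hr_lim, Eventually.of_forall fun n => (hr_mem n).1⟩)
      (Eventually.of_forall fun n => by simpa using (hr_mem n).1.le)
  have bound_tendsto_zero : Tendsto (fun n => ENNReal.ofReal (2 * r n) * C) atTop (𝓝 0) := by
    simpa using ENNReal.Tendsto.mul_const (ENNReal.tendsto_ofReal (hr_lim.const_mul 2)) (.inr hC₀)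
  have lintegral_min_eq_zero : ∫⁻ x in S, min ‖f₀ x‖ₑ ‖g₀ x‖ₑ = 0 := by
    rw [← nonpos_iff_eq_zero, ← bound_tendsto_zero.liminf_eq]
    refine (lintegral_min_enorm_le_liminf
      (fun n => (aestronglyMeasurable_average_closedBall hf₀.1 (r n)).restrict)
      (fun n => (aestronglyMeasurable_average_closedBall hg₀.1 (r n)).restrict)
      (tendsto_average hf₀) (tendsto_average hg₀)).trans
      (liminf_le_liminf (Eventually.of_forall fun n => ?_))
    exact setLIntegral_min_enorm_average_closedBall_le_of_tendsto hf hg hfg hU hC hflim hglim hS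
      (hr_mem n).1 ((Metric.cthickening_mono (hr_mem n).2.le S).trans hδU)
  rw [lintegral_eq_zero_iff' (hf₀.1.enorm.min hg₀.1.enorm).restrict] at lintegral_min_eq_zero
  filter_upwards [lintegral_min_eq_zero] with x hx
  simpa [min_eq_bot] using hx

end WeakLimit

section ChangeOfCoordinates

variable {E E' F : Type*} [NormedAddCommGroup E] [NormedSpace ℝ E]
  [NormedAddCommGroup E'] [NormedSpace ℝ E'] [NormedAddCommGroup F] [InnerProductSpace ℝ F]

lemma IsUnitTestFunction.comp_symm (L : E ≃L[ℝ] E') {U : Set E'} {φ : E → F}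
    (hφ : IsUnitTestFunction (L ⁻¹' U) φ) : IsUnitTestFunction U (φ ∘ L.symm) where
  contDiff := hφ.contDiff.comp L.symm.contDiff
  hasCompactSupport := hφ.hasCompactSupport.comp_homeomorph L.symm.toHomeomorph
  tsupport_subset y hy := by
    have hy' : L.symm y ∈ tsupport φ := tsupport_comp_subset_preimage φ L.symm.continuous hy
    simpa using hφ.tsupport_subset hy'
  norm_le_one y := hφ.norm_le_one _

lemma directionalVariation_smul_measure [MeasurableSpace E] (c : NNReal) (μ : Measure E)
    (U : Set E) (v : E) (f : E → F) :
    directionalVariation (c • μ) U v f = c * directionalVariation μ U v f := by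
  simp_rw [directionalVariation, ENNReal.mul_iSup, Measure.restrict_smul,
    integral_smul_nnreal_measure, NNReal.smul_def, smul_eq_mul,
    ENNReal.ofReal_mul c.coe_nonneg, ENNReal.ofReal_coe_nnreal]

lemma planarVariation_indicator [MeasurableSpace E] {μ : Measure E} {U : Set E}
    (hU : MeasurableSet U) (v w : E) (f : E → F) :
    planarVariation μ U v w (U.indicator f) = planarVariation μ U v w f := by
  have integral_indicator_eq (v : E) (φ : E → F) :
      ∫ x in U, ⟪U.indicator f x, fderiv ℝ φ x v⟫ ∂μ = ∫ x in U, ⟪f x, fderiv ℝ φ x v⟫ ∂μ :=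
    setIntegral_congr_fun hU fun x hx => by simp only [Set.indicator_of_mem hx]
  simp only [planarVariation, directionalVariation, integral_indicator_eq]

variable [MeasurableSpace E] [BorelSpace E] [MeasurableSpace E'] [BorelSpace E']

lemma directionalVariation_comp_le (L : E ≃L[ℝ] E') (μ : Measure E) (U : Set E') (v : E)
    (f : E' → F) :
    directionalVariation μ (L ⁻¹' U) v (f ∘ L) ≤ directionalVariation (μ.map L) U (L v) f := by
  refine iSup_le fun ⟨φ, hφ⟩ => ?_
  have change_var : ∫ x in L ⁻¹' U, ⟪(f ∘ L) x, fderiv ℝ φ x v⟫ ∂μ =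
      ∫ y in U, ⟪f y, fderiv ℝ (φ ∘ L.symm) y (L v)⟫ ∂μ.map L := by
    refine Eq.trans ?_
      (L.toHomeomorph.measurableEmbedding.setIntegral_map (μ := μ) _ U).symm
    simp [L.symm.comp_right_fderiv]
  rw [change_var]
  exact le_iSup_of_le ⟨_, hφ.comp_symm L⟩ le_rfl

lemma planarVariation_comp_le (L : E ≃L[ℝ] E') {μ : Measure E} {ν : Measure E'} {c : NNReal}
    (hL : μ.map L = c • ν) (U : Set E') (v w : E) (f : E' → F) :
    planarVariation μ (L ⁻¹' U) v w (f ∘ L) ≤ c * planarVariation ν U (L v) (L w) f := by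
  rw [planarVariation, planarVariation, mul_add, ← directionalVariation_smul_measure,
    ← directionalVariation_smul_measure, ← hL]
  exact add_le_add (directionalVariation_comp_le L μ U v f) (directionalVariation_comp_le L μ U w f)

lemma setIntegral_comp_eq_smul (L : E ≃L[ℝ] E') {μ : Measure E} {ν : Measure E'} {c : NNReal}
    (hL : μ.map L = c • ν) (f : E' → F) (S : Set E) :
    ∫ x in S, f (L x) ∂μ = c • ∫ y in L.symm ⁻¹' S, f y ∂ν := by
  have emb : MeasurableEmbedding L := L.toHomeomorph.measurableEmbedding
  rw [← integral_smul_nnreal_measure, ← Measure.restrict_smul, ← hL,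
    emb.setIntegral_map, ← Set.preimage_comp, L.symm_comp_self, Set.preimage_id]

lemma ae_restrict_eq_zero_or_eq_zero_of_linearChart [CompleteSpace F] (L : (ℝ × ℝ × ℝ) ≃L[ℝ] E)
    {μ : Measure E} [μ.IsAddHaarMeasure] {f g : ℕ → E → F} {f₀ g₀ : E → F} {U : Set E} {C : ℝ≥0∞}
    (hf : ∀ k, Integrable (f k) μ) (hg : ∀ k, Integrable (g k) μ)
    (hfg : ∀ k, ∀ᵐ y ∂μ, f k y = 0 ∨ g k y = 0) (hU : IsOpen U) (hC₀ : C ≠ ⊤)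
    (hC : ∀ k, planarVariation μ U (L (1, 0, 0)) (L (0, 0, 1)) (f k) +
      planarVariation μ U (L (0, 1, 0)) (L (0, 0, 1)) (g k) ≤ C)
    (hf₀ : Integrable f₀ μ) (hg₀ : Integrable g₀ μ)
    (hflim : ∀ B, MeasurableSet B →
      Tendsto (fun k => ∫ y in B, f k y ∂μ) atTop (𝓝 (∫ y in B, f₀ y ∂μ)))
    (hglim : ∀ B, MeasurableSet B →
      Tendsto (fun k => ∫ y in B, g k y ∂μ) atTop (𝓝 (∫ y in B, g₀ y ∂μ))) :
    ∀ᵐ y ∂μ.restrict U, f₀ y = 0 ∨ g₀ y = 0 := by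
  have : FiniteDimensional ℝ E := L.toLinearEquiv.finiteDimensional
  have := L.isAddHaarMeasure_map volume
  have emb : MeasurableEmbedding L := L.toHomeomorph.measurableEmbedding
  let c : NNReal := Measure.addHaarScalarFactor (volume.map L) μ
  have hc : c ≠ 0 := (Measure.addHaarScalarFactor_pos_of_isAddHaarMeasure _ _).ne'
  have hL : volume.map L = c • μ := Measure.isAddLeftInvariant_eq_smul _ _
  have integrable_comp {h : E → F} (hh : Integrable h μ) : Integrable (h ∘ L) volume :=
    emb.integrable_map_iff.1 (hL ▸ hh.smul_measure_nnreal)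
  have measurable_ball (x : ℝ × ℝ × ℝ) (r : ℝ) :
      MeasurableSet (L.symm ⁻¹' Metric.closedBall x r) :=
    L.symm.continuous.measurable measurableSet_closedBall
  have pullback_ae : ∀ᵐ x ∂volume.restrict (L ⁻¹' U), f₀ (L x) = 0 ∨ g₀ (L x) = 0 := by
    refine ae_restrict_eq_zero_or_eq_zero_of_tendsto (f := fun k => f k ∘ L)
      (g := fun k => g k ∘ L) (C := c * C) (fun k => integrable_comp (hf k))
      (fun k => integrable_comp (hg k)) (fun k => ?_) (hU.preimage L.continuous)
      (ENNReal.mul_ne_top ENNReal.coe_ne_top hC₀) (fun k => ?_) (integrable_comp hf₀)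
      (integrable_comp hg₀) (fun x r => ?_) (fun x r => ?_)
    · exact emb.ae_map_iff.1 (hL ▸ Measure.ae_smul_measure (hfg k) c)
    · refine (add_le_add (planarVariation_comp_le L hL U _ _ _)
        (planarVariation_comp_le L hL U _ _ _)).trans ?_
      rw [← mul_add]
      gcongr
      exact hC k
    · simpa only [Function.comp_apply, setIntegral_comp_eq_smul L hL] using
        (hflim _ (measurable_ball x r)).const_smul c
    · simpa only [Function.comp_apply, setIntegral_comp_eq_smul L hL] using
        (hglim _ (measurable_ball x r)).const_smul c
  rwa [← emb.ae_map_iff (p := fun y => f₀ y = 0 ∨ g₀ y = 0), ← emb.restrict_map, hL,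
    Measure.restrict_smul, Measure.ae_smul_measure_iff hc] at pullback_ae

theorem ae_restrict_eq_zero_or_eq_zero_of_integrableOn [CompleteSpace F] (L : (ℝ × ℝ × ℝ) ≃L[ℝ] E)
    {μ : Measure E} [μ.IsAddHaarMeasure] {f g : ℕ → E → F} {f₀ g₀ : E → F} {U : Set E} {C : ℝ≥0∞}
    (hf : ∀ k, IntegrableOn (f k) U μ) (hg : ∀ k, IntegrableOn (g k) U μ)
    (hfg : ∀ k, ∀ᵐ y ∂μ.restrict U, f k y = 0 ∨ g k y = 0) (hU : IsOpen U) (hC₀ : C ≠ ⊤)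
    (hC : ∀ k, planarVariation μ U (L (1, 0, 0)) (L (0, 0, 1)) (f k) +
      planarVariation μ U (L (0, 1, 0)) (L (0, 0, 1)) (g k) ≤ C)
    (hf₀ : IntegrableOn f₀ U μ) (hg₀ : IntegrableOn g₀ U μ)
    (hflim : ∀ B, MeasurableSet B →
      Tendsto (fun k => ∫ y in B ∩ U, f k y ∂μ) atTop (𝓝 (∫ y in B ∩ U, f₀ y ∂μ)))
    (hglim : ∀ B, MeasurableSet B →
      Tendsto (fun k => ∫ y in B ∩ U, g k y ∂μ) atTop (𝓝 (∫ y in B ∩ U, g₀ y ∂μ))) :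
    ∀ᵐ y ∂μ.restrict U, f₀ y = 0 ∨ g₀ y = 0 := by
  have hUm : MeasurableSet U := hU.measurableSet
  have indicator_ae : ∀ᵐ y ∂μ.restrict U, U.indicator f₀ y = 0 ∨ U.indicator g₀ y = 0 := by
    refine ae_restrict_eq_zero_or_eq_zero_of_linearChart L (f := fun k => U.indicator (f k))
      (g := fun k => U.indicator (g k)) (fun k => (hf k).integrable_indicator hUm)
      (fun k => (hg k).integrable_indicator hUm) (fun k => ?_) hU hC₀ (fun k => ?_)
      (hf₀.integrable_indicator hUm) (hg₀.integrable_indicator hUm) ?_ ?_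
    · filter_upwards [(ae_restrict_iff' hUm).1 (hfg k)] with y hy
      by_cases hyU : y ∈ U
      · simpa only [Set.indicator_of_mem hyU] using hy hyU
      · exact .inl (Set.indicator_of_notMem hyU _)
    · simpa only [planarVariation_indicator hUm] using hC k
    · simpa only [setIntegral_indicator hUm] using hflim
    · simpa only [setIntegral_indicator hUm] using hglim
  filter_upwards [indicator_ae, ae_restrict_mem hUm] with y hy hyU
  simpa only [Set.indicator_of_mem hyU] using hy

end ChangeOfCoordinates

section LinearAlgebra

variable {E : Type*} [NormedAddCommGroup E] [InnerProductSpace ℝ E]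

lemma tendsto_of_forall_tendsto_inner [FiniteDimensional ℝ E] {ι : Type*} {l : Filter ι}
    {x : ι → E} {x₀ : E}
    (h : ∀ u, Tendsto (fun i => ⟪u, x i⟫) l (𝓝 ⟪u, x₀⟫)) : Tendsto x l (𝓝 x₀) := by
  let b := stdOrthonormalBasis ℝ E
  simpa only [b.sum_repr'] using
    tendsto_finsetSum Finset.univ fun i _ => (h (b i)).smul_const (b i)

lemma exists_norm_eq_one_inner_eq_zero_inner_ne_zero {m n : E}
    (h : LinearIndependent ℝ ![m, n]) : ∃ a : E, ‖a‖ = 1 ∧ ⟪a, m⟫ = 0 ∧ ⟪a, n⟫ ≠ 0 := by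
  obtain ⟨a, ham, han⟩ : ∃ a : E, ⟪a, m⟫ = 0 ∧ ⟪a, n⟫ ≠ 0 := by
    by_contra! hall
    have hn : n ∈ (ℝ ∙ m)ᗮᗮ := fun a ha =>
      hall a (Submodule.mem_orthogonal_singleton_iff_inner_left.1 ha)
    rw [Submodule.orthogonal_orthogonal, Submodule.mem_span_singleton] at hn
    obtain ⟨t, rfl⟩ := hn
    simpa using (LinearIndependent.pair_iff.1 h t (-1) (by simp)).2
  have ha : a ≠ 0 := fun h0 => han (by simp [h0])
  refine ⟨(‖a‖⁻¹ : ℝ) • a, norm_smul_inv_norm ha, ?_, ?_⟩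
  · simp [real_inner_smul_left, ham]
  · simpa [real_inner_smul_left, ha] using han

lemma exists_norm_eq_one_inner_eq_zero_inner_eq_zero (hE : 2 < Module.finrank ℝ E) (m n : E) :
    ∃ c : E, ‖c‖ = 1 ∧ ⟪c, m⟫ = 0 ∧ ⟪c, n⟫ = 0 := by
  have : FiniteDimensional ℝ E := .of_finrank_pos (by lia)
  have hker : ((innerₛₗ ℝ m).prod (innerₛₗ ℝ n)).ker ≠ ⊥ :=
    LinearMap.ker_ne_bot_of_finrank_lt (by simpa using hE)
  obtain ⟨c, hc, hc0⟩ := Submodule.exists_mem_ne_zero_of_ne_bot hker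
  obtain ⟨hcm, hcn⟩ : ⟪m, c⟫ = 0 ∧ ⟪n, c⟫ = 0 := by simpa using hc
  refine ⟨(‖c‖⁻¹ : ℝ) • c, norm_smul_inv_norm hc0, ?_, ?_⟩
  · rw [real_inner_smul_left, real_inner_comm, hcm, mul_zero]
  · rw [real_inner_smul_left, real_inner_comm, hcn, mul_zero]

lemma exists_linearChart_inner_eq_zero (hE : Module.finrank ℝ E = 3) {m n : E}
    (h : LinearIndependent ℝ ![m, n]) :
    ∃ L : (ℝ × ℝ × ℝ) ≃L[ℝ] E,
      ‖L (1, 0, 0)‖ = 1 ∧ ‖L (0, 1, 0)‖ = 1 ∧ ‖L (0, 0, 1)‖ = 1 ∧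
      ⟪L (1, 0, 0), m⟫ = 0 ∧ ⟪L (0, 0, 1), m⟫ = 0 ∧
      ⟪L (0, 1, 0), n⟫ = 0 ∧ ⟪L (0, 0, 1), n⟫ = 0 := by
  have : FiniteDimensional ℝ E := .of_finrank_pos (by lia)
  obtain ⟨a, ha, ham, han⟩ := exists_norm_eq_one_inner_eq_zero_inner_ne_zero h
  obtain ⟨b, hb, hbn, hbm⟩ :=
    exists_norm_eq_one_inner_eq_zero_inner_ne_zero (LinearIndependent.pair_symm_iff.1 h)
  obtain ⟨c, hc, hcm, hcn⟩ := exists_norm_eq_one_inner_eq_zero_inner_eq_zero (by lia) m n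
  let T : ℝ × ℝ × ℝ →ₗ[ℝ] E := (LinearMap.toSpanSingleton ℝ E a).coprod
    ((LinearMap.toSpanSingleton ℝ E b).coprod (LinearMap.toSpanSingleton ℝ E c))
  have T_apply (x y z : ℝ) : T (x, y, z) = x • a + (y • b + z • c) := rfl
  have T_injective : Function.Injective T := by
    rw [injective_iff_map_eq_zero]
    rintro ⟨x, y, z⟩ hT
    rw [T_apply] at hT
    obtain rfl : x = 0 := by
      simpa [inner_add_left, real_inner_smul_left, hbn, hcn, han] using congrArg (⟪·, n⟫) hT
    obtain rfl : y = 0 := by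
      simpa [inner_add_left, real_inner_smul_left, hcm, hbm] using congrArg (⟪·, m⟫) hT
    obtain rfl : z = 0 := by
      simpa [← norm_eq_zero (a := c), hc] using hT
    rfl
  let L : (ℝ × ℝ × ℝ) ≃L[ℝ] E :=
    (LinearEquiv.ofInjectiveOfFinrankEq T T_injective (by simp [hE])).toContinuousLinearEquiv
  have L_apply (x y z : ℝ) : L (x, y, z) = x • a + (y • b + z • c) := rfl
  refine ⟨L, ?_⟩
  simp [L_apply, ha, hb, hc, ham, hcm, hbn, hcn]

end LinearAlgebra

section SlipFields

lemma ONBperp.exists_eq_smul_add_smul {m e₁ e₂ : V3} (he : ONBperp m e₁ e₂) (hm : ‖m‖ = 1) {w : V3}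
    (hw : ⟪w, m⟫ = 0) : ∃ a b : ℝ, w = a • e₁ + b • e₂ ∧ a ^ 2 + b ^ 2 = ‖w‖ ^ 2 := by
  obtain ⟨h₁, h₂, h₁₂, h₁m, h₂m⟩ := he
  have orthonormal : Orthonormal ℝ ![e₁, e₂, m] := by
    refine ⟨fun i => by fin_cases i <;> simp [h₁, h₂, hm], fun i j hij => ?_⟩
    fin_cases i <;> fin_cases j <;> simp_all [real_inner_comm]
  let b : OrthonormalBasis (Fin 3) ℝ V3 := .mk orthonormal
    (orthonormal.linearIndependent.span_eq_top_of_card_eq_finrank (by simp)).ge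
  have expansion := b.sum_repr' w
  have parseval := b.sum_sq_norm_inner_right w
  simp only [b, OrthonormalBasis.coe_mk, Fin.sum_univ_three, Matrix.cons_val_zero,
    Matrix.cons_val_one, Matrix.cons_val, real_inner_comm w m, hw] at expansion parseval
  exact ⟨⟪e₁, w⟫, ⟪e₂, w⟫, by simpa using expansion.symm, by simpa using parseval⟩

lemma ONBperp.directionalVariation_le {m e₁ e₂ : V3} (he : ONBperp m e₁ e₂) (hm : ‖m‖ = 1) {w : V3}
    (hwm : ⟪w, m⟫ = 0) (hw : ‖w‖ = 1) (U : Set V3) (s : V3 → V3) :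
    directionalVariation volume U w s ≤ PTV U e₁ e₂ s := by
  obtain ⟨a, b, rfl, hab⟩ := he.exists_eq_smul_add_smul hm hwm
  refine iSup_le fun ⟨φ, hφ⟩ => ?_
  have C1c_smul (t : ℝ) : C1c U (t • φ) :=
    ⟨hφ.contDiff.const_smul t, hφ.hasCompactSupport.smul_left,
      (tsupport_smul_subset_right (fun _ => t) φ).trans hφ.tsupport_subset⟩
  have norm_sq_le (x : V3) : ‖(a • φ) x‖ ^ 2 + ‖(b • φ) x‖ ^ 2 ≤ 1 := by
    calc ‖(a • φ) x‖ ^ 2 + ‖(b • φ) x‖ ^ 2 = (a ^ 2 + b ^ 2) * ‖φ x‖ ^ 2 := by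
          simp only [Pi.smul_apply, norm_smul, mul_pow, Real.norm_eq_abs, sq_abs, add_mul]
      _ ≤ 1 := by
          rw [hab, hw, one_pow, one_mul]
          exact pow_le_one₀ (norm_nonneg _) (hφ.norm_le_one x)
  refine le_iSup_of_le ⟨(a • φ, b • φ), C1c_smul a, C1c_smul b, norm_sq_le⟩ (le_of_eq ?_)
  simp [fderiv_const_smul (hφ.contDiff.differentiable one_ne_zero _), inner_add_right,
    real_inner_smul_right]

lemma ONBperp.planarVariation_le {m e₁ e₂ : V3} (he : ONBperp m e₁ e₂) (hm : ‖m‖ = 1) {v w : V3}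
    (hvm : ⟪v, m⟫ = 0) (hv : ‖v‖ = 1) (hwm : ⟪w, m⟫ = 0) (hw : ‖w‖ = 1) (U : Set V3)
    (s : V3 → V3) : planarVariation volume U v w s ≤ PTV U e₁ e₂ s + PTV U e₁ e₂ s :=
  add_le_add (he.directionalVariation_le hm hvm hv U s) (he.directionalVariation_le hm hwm hw U s)

variable {p : ℝ} {Ω : Set V3}

lemma MemLpV.integrableOn {f : V3 → V3} (hf : MemLpV p Ω f) (hp : 1 ≤ p)
    (hΩ : Bornology.IsBounded Ω) : IntegrableOn f Ω := by
  have : IsFiniteMeasure (volume.restrict Ω) := isFiniteMeasure_restrict.2 hΩ.measure_lt_top.ne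
  have hLp : MemLp f (ENNReal.ofReal p) (volume.restrict Ω) := by
    rw [← integrable_norm_rpow_iff hf.1 (by simpa using zero_lt_one.trans_le hp)
      ENNReal.ofReal_ne_top, ENNReal.toReal_ofReal (zero_le_one.trans hp)]
    exact hf.2
  exact hLp.integrable (by simpa using hp)

lemma conjTestV_indicator_const (hp : 1 ≤ p) (hΩ : Bornology.IsBounded Ω) {B : Set V3}
    (hB : MeasurableSet B) (u : V3) : ConjTestV p Ω (B.indicator fun _ => u) := by
  have : IsFiniteMeasure (volume.restrict Ω) := isFiniteMeasure_restrict.2 hΩ.measure_lt_top.ne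
  have hmeas : AEStronglyMeasurable (B.indicator fun _ => u) (volume.restrict Ω) :=
    (stronglyMeasurable_const.indicator hB).aestronglyMeasurable
  refine ⟨hmeas, ?_⟩
  rcases hp.eq_or_lt with rfl | hp
  · exact .inl ⟨rfl, ‖u‖, Eventually.of_forall fun x => norm_indicator_le_norm_self _ _⟩
  · have hq : 0 < p / (p - 1) := div_pos (zero_lt_one.trans hp) (sub_pos.2 hp)
    refine .inr ⟨hp, ?_⟩
    have hLq : MemLp (B.indicator fun _ => u) (ENNReal.ofReal (p / (p - 1))) (volume.restrict Ω) :=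
      (memLp_const u).indicator hB
    simpa [IntegrableOn, ENNReal.toReal_ofReal hq.le] using
      hLq.integrable_norm_rpow (by simpa using hq) ENNReal.ofReal_ne_top

lemma WeakLpV.tendsto_setIntegral_inner {sk : ℕ → V3 → V3} {s : V3 → V3} (h : WeakLpV p Ω sk s)
    (hp : 1 ≤ p) (hΩ : Bornology.IsBounded Ω) {B : Set V3} (hB : MeasurableSet B) (u : V3) :
    Tendsto (fun k => ∫ x in B ∩ Ω, ⟪sk k x, u⟫) atTop (𝓝 (∫ x in B ∩ Ω, ⟪s x, u⟫)) := by
  have integral_indicator_eq (t : V3 → V3) :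
      ∫ x in Ω, ⟪t x, B.indicator (fun _ => u) x⟫ = ∫ x in B ∩ Ω, ⟪t x, u⟫ := by
    rw [← Measure.restrict_restrict hB, ← integral_indicator hB]
    congr with x
    by_cases hx : x ∈ B <;> simp [hx]
  simpa only [integral_indicator_eq] using h _ (conjTestV_indicator_const hp hΩ hB u)

lemma WeakLpV.tendsto_setIntegral {sk : ℕ → V3 → V3} {s : V3 → V3} (h : WeakLpV p Ω sk s)
    (hsk : ∀ k, MemLpV p Ω (sk k)) (hs : MemLpV p Ω s)
    (hp : 1 ≤ p) (hΩ : Bornology.IsBounded Ω) {B : Set V3} (hB : MeasurableSet B) :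
    Tendsto (fun k => ∫ x in B ∩ Ω, sk k x) atTop (𝓝 (∫ x in B ∩ Ω, s x)) := by
  have inner_integral {t : V3 → V3} (ht : MemLpV p Ω t) (u : V3) :
      ⟪u, ∫ x in B ∩ Ω, t x⟫ = ∫ x in B ∩ Ω, ⟪t x, u⟫ := by
    have hint : IntegrableOn t (B ∩ Ω) := (ht.integrableOn hp hΩ).mono_set Set.inter_subset_right
    simpa only [real_inner_comm] using (integral_inner hint u).symm
  refine tendsto_of_forall_tendsto_inner fun u => ?_
  simpa only [inner_integral (hsk _), inner_integral hs] using
    h.tendsto_setIntegral_inner hp hΩ hB u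

lemma WeakLpV.ae_inner_eq_zero {sk : ℕ → V3 → V3} {s : V3 → V3} (h : WeakLpV p Ω sk s)
    (hs : MemLpV p Ω s) (hp : 1 ≤ p) (hΩ : Bornology.IsBounded Ω) {u : V3}
    (hsk : ∀ k, ∀ᵐ x ∂volume.restrict Ω, ⟪sk k x, u⟫ = 0) :
    ∀ᵐ x ∂volume.restrict Ω, ⟪s x, u⟫ = 0 := by
  refine Integrable.ae_eq_zero_of_forall_setIntegral_eq_zero
    ((hs.integrableOn hp hΩ).inner_const u) fun B hB _ => ?_
  rw [Measure.restrict_restrict hB]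
  refine tendsto_nhds_unique (h.tendsto_setIntegral_inner hp hΩ hB u)
    (tendsto_const_nhds.congr fun k => (integral_eq_zero_of_ae ?_).symm)
  exact ae_restrict_of_ae_restrict_of_subset Set.inter_subset_right (hsk k)

lemma WeakLpV.ae_eq_zero_or_eq_zero {m n e₁ e₂ d₁ d₂ : V3} {f g : ℕ → V3 → V3} {f₀ g₀ : V3 → V3}
    {K : ℝ≥0∞} (hflim : WeakLpV p Ω f f₀) (hglim : WeakLpV p Ω g g₀)
    (hf : ∀ k, MemLpV p Ω (f k)) (hg : ∀ k, MemLpV p Ω (g k))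
    (hf₀ : MemLpV p Ω f₀) (hg₀ : MemLpV p Ω g₀)
    (hp : 1 ≤ p) (hΩ : IsOpen Ω) (hΩb : Bornology.IsBounded Ω)
    (hm : ‖m‖ = 1) (hn : ‖n‖ = 1) (hmn : LinearIndependent ℝ ![m, n])
    (he : ONBperp m e₁ e₂) (hd : ONBperp n d₁ d₂) (hK : K ≠ ⊤)
    (hfK : ∀ k, PTV Ω e₁ e₂ (f k) ≤ K) (hgK : ∀ k, PTV Ω d₁ d₂ (g k) ≤ K)
    (hfg : ∀ k, ∀ᵐ x ∂volume.restrict Ω, f k x = 0 ∨ g k x = 0) :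
    ∀ᵐ x ∂volume.restrict Ω, f₀ x = 0 ∨ g₀ x = 0 := by
  obtain ⟨L, ha, hb, hc, ham, hcm, hbn, hcn⟩ :=
    exists_linearChart_inner_eq_zero finrank_euclideanSpace_fin hmn
  have variation_le (k : ℕ) : planarVariation volume Ω (L (1, 0, 0)) (L (0, 0, 1)) (f k) +
      planarVariation volume Ω (L (0, 1, 0)) (L (0, 0, 1)) (g k) ≤ (K + K) + (K + K) :=
    add_le_add
      ((he.planarVariation_le hm ham ha hcm hc Ω _).trans (add_le_add (hfK k) (hfK k)))
      ((hd.planarVariation_le hn hbn hb hcn hc Ω _).trans (add_le_add (hgK k) (hgK k)))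
  exact ae_restrict_eq_zero_or_eq_zero_of_integrableOn L
    (fun k => (hf k).integrableOn hp hΩb) (fun k => (hg k).integrableOn hp hΩb) hfg hΩ
    (by finiteness) variation_le (hf₀.integrableOn hp hΩb) (hg₀.integrableOn hp hΩb)
    (fun _ hB => hflim.tendsto_setIntegral hf hf₀ hp hΩb hB)
    (fun _ hB => hglim.tendsto_setIntegral hg hg₀ hp hΩb hB)

end SlipFields

/-- The single-plane condition is preserved under weak `L^p` convergence,
provided the density of geometrically necessary dislocations is uniformly bounded:
if each `{s_j^k}` satisfies the single-plane condition, `s_j^k ⇀ s_j` weakly in `L^p`,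
and `Σ_j ∫_Ω |∇_{m_j^⊥} s_j^k| ≤ K` uniformly, then `{s_j}` satisfies the single-plane
condition. -/
theorem single_plane_condition_weakly_closed
    (Ω : Set V3) (hΩo : IsOpen Ω) (hΩb : Bornology.IsBounded Ω)
    (p : ℝ) (hp : 1 ≤ p)
    (N : ℕ) (m : Fin N → V3) (hm : ∀ j, ‖m j‖ = 1)
    (hmli : ∀ i j, i ≠ j → ∀ a b : ℝ, a • m i + b • m j = 0 → a = 0 ∧ b = 0)
    (e : Fin N → V3 × V3) (he : ∀ j, ONBperp (m j) (e j).1 (e j).2)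
    (sk : ℕ → Fin N → V3 → V3) (s : Fin N → V3 → V3)
    (hskLp : ∀ k j, MemLpV p Ω (sk k j)) (hsLp : ∀ j, MemLpV p Ω (s j))
    -- (P1): single-plane condition along the sequence
    (hperp : ∀ k j, ∀ᵐ x ∂volume.restrict Ω, ⟪sk k j x, m j⟫ = 0)
    (hplane : ∀ k, ∀ i j, i ≠ j →
      ∀ᵐ x ∂volume.restrict Ω, ‖sk k i x‖ * ‖sk k j x‖ = 0)
    -- (P2): weak convergence in L^p
    (hweak : ∀ j, WeakLpV p Ω (fun k => sk k j) (s j))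
    -- (P3): uniformly bounded dislocation density
    (K : ℝ≥0∞) (hK : K < ⊤)
    (hcurl : ∀ k, ∑ j, PTV Ω (e j).1 (e j).2 (sk k j) ≤ K) :
    (∀ j, ∀ᵐ x ∂volume.restrict Ω, ⟪s j x, m j⟫ = 0) ∧
    (∀ i j, i ≠ j → ∀ᵐ x ∂volume.restrict Ω, ‖s i x‖ * ‖s j x‖ = 0) := by
  have PTV_le (k : ℕ) (j : Fin N) : PTV Ω (e j).1 (e j).2 (sk k j) ≤ K :=
    (Finset.single_le_sum_of_canonicallyOrdered (Finset.mem_univ j)).trans (hcurl k)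
  refine ⟨fun j => (hweak j).ae_inner_eq_zero (hsLp j) hp hΩb fun k => hperp k j,
    fun i j hij => ?_⟩
  have disjoint (k : ℕ) : ∀ᵐ x ∂volume.restrict Ω, sk k i x = 0 ∨ sk k j x = 0 := by
    simpa only [mul_eq_zero, norm_eq_zero] using hplane k i j hij
  simpa only [mul_eq_zero, norm_eq_zero] using (hweak i).ae_eq_zero_or_eq_zero (hweak j)
    (fun k => hskLp k i) (fun k => hskLp k j) (hsLp i) (hsLp j) hp hΩo hΩb (hm i) (hm j)
    (LinearIndependent.pair_iff.2 (hmli i j hij)) (he i) (he j) hK.ne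
    (fun k => PTV_le k i) (fun k => PTV_le k j) disjoint

end
end

section
/- Let l_1, l_2 > 0 and Q = (0,l_1)×(0,l_2) ⊂ ℝ². Let f, g : Q → ℝⁿ be measurable with |f(x)||g(x)| = 0 for a.e. x ∈ Q. Define ω_1 := { x_1 ∈ (0,l_1) : f(x_1,x_2) ≠ 0 for a.e. x_2 ∈ (0,l_2) } and ω_2 := { x_2 ∈ (0,l_2) : g(x_1,x_2) ≠ 0 for a.e. x_1 ∈ (0,l_1) }. Then at least one of ω_1, ω_2 has one-dimensional Lebesgue measure zero. -/
open MeasureTheory Set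

/-!
Fubini's theorem shows that for almost every `x`, the slice `g (x, ·)` is nonzero at almost every
point `y` of `ω₂`. If `ω₁` is not null, it contains such an `x`; there `f (x, ·)` is almost
everywhere nonzero, so `g (x, ·)` vanishes almost everywhere, and `ω₂` must be null.
-/

section Slices

variable {α β : Type*} [MeasurableSpace α] [MeasurableSpace β]
  {μ : Measure α} {ν : Measure β} [SFinite μ] [SFinite ν] {S T : Set (α × β)}

lemma measurableSet_setOf_ae_prodMk_right_mem (hT : MeasurableSet T) :
    MeasurableSet {y | ∀ᵐ x ∂μ, (x, y) ∈ T} :=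
  measurable_measure_prodMk_right hT.compl (measurableSet_singleton 0)

lemma ae_ae_mem_of_ae_prodMk_right_mem (hT : NullMeasurableSet T (μ.prod ν)) :
    ∀ᵐ x ∂μ, ∀ᵐ y ∂ν, (∀ᵐ x' ∂μ, (x', y) ∈ T) → (x, y) ∈ T := by
  obtain ⟨T', hTT', hT', hae⟩ := hT.exists_measurable_superset_ae_eq
  have himp : MeasurableSet {z : α × β | (∀ᵐ x' ∂μ, (x', z.2) ∈ T') → z ∈ T'} :=
    (measurable_snd (measurableSet_setOf_ae_prodMk_right_mem hT')).himp hT'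
  have hslices : ∀ᵐ x ∂μ, ∀ᵐ y ∂ν, (∀ᵐ x' ∂μ, (x', y) ∈ T') → (x, y) ∈ T' := by
    rw [Measure.ae_ae_comm himp]
    exact .of_forall fun y => Filter.eventually_imp_distrib_left.2 id
  filter_upwards [hslices, Measure.ae_ae_of_ae_prod hae.mem_iff] with x hx hxT
  filter_upwards [hx, hxT] with y hy hyT hslice
  exact hyT.1 (hy (hslice.mono fun _ hx' => hTT' hx'))

lemma measure_setOf_ae_prodMk_mem_eq_zero_or (hT : NullMeasurableSet T (μ.prod ν))
    (hST : AEDisjoint (μ.prod ν) S T) :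
    μ {x | ∀ᵐ y ∂ν, (x, y) ∈ S} = 0 ∨ ν {y | ∀ᵐ x ∂μ, (x, y) ∈ T} = 0 := by
  refine or_iff_not_imp_left.2 fun hS => ?_
  have hdisj : ∀ᵐ x ∂μ, ∀ᵐ y ∂ν, (x, y) ∉ S ∩ T :=
    Measure.ae_ae_of_ae_prod (measure_eq_zero_iff_ae_notMem.1 hST)
  obtain ⟨x, hxS, hxT, hx⟩ := ((frequently_ae_mem_iff.2 hS).and_eventually
    ((ae_ae_mem_of_ae_prodMk_right_mem hT).and hdisj)).exists
  refine measure_eq_zero_iff_ae_notMem.2 ?_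
  filter_upwards [hxS, hxT, hx] with y hyS hyT hy hy'
  exact hy ⟨hyS, hyT hy'⟩

end Slices

theorem exclusion_of_mixed_activity_general {α β E F : Type*}
    [MeasurableSpace α] [MeasurableSpace β] [NormedAddCommGroup E] [NormedAddCommGroup F]
    {μ : Measure α} {ν : Measure β} [SFinite μ] [SFinite ν] {s : Set α} {t : Set β}
    (hs : MeasurableSet s) (ht : MeasurableSet t) {f : α × β → E} {g : α × β → F}
    (hg : AEStronglyMeasurable g ((μ.prod ν).restrict (s ×ˢ t)))
    (hfg : ∀ᵐ z ∂((μ.prod ν).restrict (s ×ˢ t)), ‖f z‖ * ‖g z‖ = 0) :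
    μ {x ∈ s | ∀ᵐ y ∂ν, y ∈ t → f (x, y) ≠ 0} = 0 ∨
      ν {y ∈ t | ∀ᵐ x ∂μ, x ∈ s → g (x, y) ≠ 0} = 0 := by
  rw [← Measure.prod_restrict] at hg hfg
  have hdisj : AEDisjoint ((μ.restrict s).prod (ν.restrict t))
      (Function.support f) (Function.support g) := by
    refine measure_eq_zero_iff_ae_notMem.2 (hfg.mono fun z hz hne => ?_)
    exact mul_ne_zero (norm_ne_zero_iff.2 hne.1) (norm_ne_zero_iff.2 hne.2) hz
  simpa only [Measure.restrict_apply' hs, Measure.restrict_apply' ht, ae_restrict_iff' hs,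
    ae_restrict_iff' ht, Function.mem_support, inter_comm _ s, inter_comm _ t,
    ofPred_and, ofPred_mem_eq] using
    measure_setOf_ae_prodMk_mem_eq_zero_or hg.nullMeasurableSet_support hdisj

/-- If `f, g : Q → ℝⁿ` are measurable on `Q = (0,l₁) × (0,l₂)` and
`|f(x)||g(x)| = 0` a.e. on `Q`, then at least one of the sets
`ω₁ = {x₁ : f(x₁,·) ≠ 0 a.e.}` and `ω₂ = {x₂ : g(·,x₂) ≠ 0 a.e.}` is null. -/
theorem exclusion_of_mixed_activity
    (n : ℕ) (l₁ l₂ : ℝ) (hl₁ : 0 < l₁) (hl₂ : 0 < l₂)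
    (f g : ℝ × ℝ → EuclideanSpace ℝ (Fin n))
    (hf : Measurable f) (hg : Measurable g)
    (hfg : ∀ᵐ x ∂(volume.restrict (Ioo 0 l₁ ×ˢ Ioo 0 l₂)), ‖f x‖ * ‖g x‖ = 0) :
    volume {x₁ ∈ Ioo 0 l₁ |
        ∀ᵐ x₂ ∂(volume : Measure ℝ), x₂ ∈ Ioo 0 l₂ → f (x₁, x₂) ≠ 0} = 0 ∨
    volume {x₂ ∈ Ioo 0 l₂ |
        ∀ᵐ x₁ ∂(volume : Measure ℝ), x₁ ∈ Ioo 0 l₁ → g (x₁, x₂) ≠ 0} = 0 :=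
  exclusion_of_mixed_activity_general measurableSet_Ioo measurableSet_Ioo
    hg.aestronglyMeasurable hfg
end
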